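/- arXiv:1311.1488 — 5 statements merged into one kernel-verified Lean document; each statement's English description precedes it below -/
import Mathlib

section
/- Let p ∈ (0, 1] with p < 2α. For every ε with 0 < ε ≤ (2α − p)/2 there exists N₀ such that for all N ≥ N₀ and all n ≥ 0, E[ θ_n^p ] ≤ (1 + 4p/(2α − p)) · n · (δ_N / log₂ N)^{p/(2α + ε)}; in particular E[ ((𝒴_N(n) − R^{N,m_N}(n))₊)^p ] satisfies the same bound, where x₊ = max(x,0). -/
open MeasureTheory ProbabilityTheory Real Filter Set

noncomputable section

/-- One step of the `N`-BRW: each of the `N` particles branches into two, the children jump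
according to `jump`, and only the `N` right-most particles are kept; the result is the
sorted (ascending) vector of the `N` retained positions. -/
def brwStep (N : ℕ) (pos : Fin N → ℝ) (jump : Fin N → Fin 2 → ℝ) : Fin N → ℝ := fun i =>
  (((Finset.univ : Finset (Fin N × Fin 2)).val.map fun p => pos p.1 + jump p.1 p.2).sort
      (· ≤ ·)).getD (N + i) 0

/-- The `N`-BRW started from the sorted configuration `x0`, driven by the jumps `jump`:
`brw N x0 jump n i` is the position `X_{i+1}(n)` of the `(i+1)`-th lowest particle at time `n`. -/
def brw (N : ℕ) (x0 : Fin N → ℝ) (jump : ℕ → Fin N → Fin 2 → ℝ) : ℕ → Fin N → ℝ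
  | 0 => x0
  | n + 1 => brwStep N (brw N x0 jump n) (jump n)

/-- Position `X_N(n)` of the right-most particle of the `N`-BRW started at the origin. -/
def brwMax (N : ℕ) (jump : ℕ → Fin N → Fin 2 → ℝ) (n : ℕ) : ℝ :=
  ⨆ i, brw N (fun _ => 0) jump n i

/-- Position `X_1(n)` of the left-most particle of the `N`-BRW started at the origin. -/
def brwMin (N : ℕ) (jump : ℕ → Fin N → Fin 2 → ℝ) (n : ℕ) : ℝ :=
  ⨅ i, brw N (fun _ => 0) jump n i

/-- The `(N,ℓ)`-discretised stairs process driven by the jumps `Y`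
(with the convention `R(k) = 0` for `k ≤ 0`, realised via truncated subtraction). -/
def dsp (N ℓ : ℕ) (Y : ℕ → Fin N → Fin 2 → ℝ) : ℕ → ℝ
  | 0 => 0
  | n + 1 => max (dsp N ℓ Y n) (dsp N ℓ Y (n - ℓ) + ⨆ p : Fin N × Fin 2, Y n p.1 p.2)

/-- The tail `P(X > x) = 1/h(x)` of the random variable `X` under `P`. -/
def tail {Ω : Type*} [MeasurableSpace Ω] (P : Measure Ω) (X : Ω → ℝ) (x : ℝ) : ℝ :=
  (P {ω | x < X ω}).toReal

/-- Generalized inverse `h⁻¹(y)` of `h(x) = 1 / P(X > x)`. -/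
def hinv {Ω : Type*} [MeasurableSpace Ω] (P : Measure Ω) (X : Ω → ℝ) (y : ℝ) : ℝ :=
  sInf {x : ℝ | 0 ≤ x ∧ tail P X x ≤ y⁻¹}

/-- The scaling sequence `c_N = h⁻¹(2 N log₂ N)`. -/
def cN {Ω : Type*} [MeasurableSpace Ω] (P : Measure Ω) (X : Ω → ℝ) (N : ℕ) : ℝ :=
  hinv P X (2 * N * Real.logb 2 N)

/-- `θ^{(m)}_n = max_{0 ≤ k ≤ n} (𝒴_N(k) − R^{N,m}(k))`. -/
def theta (N m : ℕ) (Y : ℕ → Fin N → Fin 2 → ℝ) (n : ℕ) : ℝ :=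
  (Finset.range (n + 1)).sup' Finset.nonempty_range_add_one fun k => brwMax N Y k - dsp N m Y k

/-- In a sorted list, the `k`-th entry exceeds `y` iff at least `length - k` entries do. -/
lemma sorted_getElem_gt_iff (L : List ℝ) (hL : L.Pairwise (· ≤ ·)) (y : ℝ) :
    ∀ k (hk : k < L.length), y < L[k] ↔ L.length ≤ k + L.countP (fun a => decide (y < a)) := by
  induction L with
  | nil => intro k hk; simp at hk
  | cons a L ih =>
    rw [List.pairwise_cons] at hL
    intro k hk
    have hle := List.countP_le_length (p := fun a => decide (y < a)) (l := L)
    cases k with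
    | zero =>
      simp only [List.getElem_cons_zero, List.length_cons, List.countP_cons, decide_eq_true_eq]
      constructor
      · intro h
        have : List.countP (fun a => decide (y < a)) L = L.length := by
          rw [List.countP_eq_length]
          intro b hb
          simpa using lt_of_lt_of_le h (hL.1 b hb)
        simp [this, h]
      · intro h
        by_contra h'
        simp only [h', if_false] at h
        omega
    | succ k =>
      have hk' : k < L.length := by simpa using hk
      simp only [List.getElem_cons_succ, List.length_cons, List.countP_cons, decide_eq_true_eq]
      rw [ih hL.2 k hk']
      by_cases hya : y < a
      · have h1 : y < L[k] := lt_of_lt_of_le hya (hL.1 _ (List.getElem_mem hk'))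
        have h2 := (ih hL.2 k hk').1 h1
        simp only [hya, if_true]
        omega
      · simp only [hya, if_false]
        omega

/-- The multiset of children. -/
def kids (N : ℕ) (pos : Fin N → ℝ) (jump : Fin N → Fin 2 → ℝ) : Multiset ℝ :=
  (Finset.univ : Finset (Fin N × Fin 2)).val.map fun p => pos p.1 + jump p.1 p.2

lemma kids_length (N : ℕ) (pos : Fin N → ℝ) (jump : Fin N → Fin 2 → ℝ) :
    ((kids N pos jump).sort (· ≤ ·)).length = N * 2 := by
  rw [Multiset.length_sort, kids, Multiset.card_map]
  simp

lemma brwStep_eq (N : ℕ) (pos : Fin N → ℝ) (jump : Fin N → Fin 2 → ℝ) (i : Fin N) :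
    brwStep N pos jump i = ((kids N pos jump).sort (· ≤ ·))[N + i]'(by
      rw [kids_length]; omega) := by
  unfold brwStep
  exact List.getD_eq_getElem _ _ _

lemma brwStep_mem (N : ℕ) (pos : Fin N → ℝ) (jump : Fin N → Fin 2 → ℝ) (i : Fin N) :
    ∃ i' j', brwStep N pos jump i = pos i' + jump i' j' := by
  have h : brwStep N pos jump i ∈ kids N pos jump := by
    rw [brwStep_eq, ← Multiset.mem_sort (r := (· ≤ ·))]
    exact List.getElem_mem _
  unfold kids at h
  rw [Multiset.mem_map] at h
  obtain ⟨q, _, hq⟩ := h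
  exact ⟨q.1, q.2, hq.symm⟩

lemma brwStep_sum_le (N : ℕ) (pos : Fin N → ℝ) (jump : Fin N → Fin 2 → ℝ) (f : ℝ → ENNReal) :
    ∑ i, f (brwStep N pos jump i) ≤ ∑ i, ∑ j, f (pos i + jump i j) := by
  have h1 : ∑ i, ∑ j, f (pos i + jump i j) = ((kids N pos jump).map f).sum := by
    rw [← Fintype.sum_prod_type' (f := fun i j => f (pos i + jump i j))]
    unfold kids
    rw [Multiset.map_map]
    rfl
  rw [h1]
  conv_rhs => rw [← Multiset.sort_eq (kids N pos jump) (· ≤ ·)]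
  rw [Multiset.map_coe, Multiset.sum_coe]
  set L := (kids N pos jump).sort (· ≤ ·) with hLdef
  have hlen : L.length = N * 2 := kids_length N pos jump
  have h2 : (L.map f).sum = ∑ i : Fin L.length, f L[i] := by
    rw [← List.sum_ofFn]
    congr 1
    apply List.ext_getElem <;> simp
  rw [h2]
  let e : Fin N → Fin L.length := fun i => ⟨N + i, by omega⟩
  have he : Function.Injective e := by
    intro a b hab
    simp only [e, Fin.mk.injEq] at hab
    exact Fin.ext (by omega)
  calc ∑ i, f (brwStep N pos jump i) = ∑ i, f L[e i] := by
        refine Finset.sum_congr rfl fun i _ => ?_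
        rw [brwStep_eq]
        rfl
    _ = ∑ i ∈ Finset.univ.image e, f L[i] := by
        rw [Finset.sum_image (fun a _ b _ h => he h)]
    _ ≤ ∑ i : Fin L.length, f L[i] := Finset.sum_le_sum_of_subset (Finset.subset_univ _)

lemma brwStep_gt_iff (N : ℕ) (pos : Fin N → ℝ) (jump : Fin N → Fin 2 → ℝ) (i : Fin N) (y : ℝ) :
    y < brwStep N pos jump i ↔
      N * 2 ≤ N + i + ∑ q : Fin N × Fin 2, if y < pos q.1 + jump q.1 q.2 then 1 else 0 := by
  rw [brwStep_eq, sorted_getElem_gt_iff _ (Multiset.pairwise_sort _ _), kids_length]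
  have : ((kids N pos jump).sort (· ≤ ·)).countP (fun a => decide (y < a)) =
      ∑ q : Fin N × Fin 2, if y < pos q.1 + jump q.1 q.2 then 1 else 0 := by
    have h := Multiset.coe_countP (fun a => y < a) ((kids N pos jump).sort (· ≤ ·))
    rw [Multiset.sort_eq] at h
    rw [← h]
    unfold kids
    rw [Multiset.countP_map, ← Finset.filter_val, Finset.card_val, Finset.card_filter]
  rw [this]

lemma measurable_brw {Ω : Type*} [MeasurableSpace Ω] (N : ℕ) (Y : ℕ → Fin N → Fin 2 → Ω → ℝ)
    (n : ℕ) (hY : ∀ k, k < n → ∀ i j, Measurable (Y k i j)) (i : Fin N) :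
    Measurable (fun ω => brw N (fun _ => 0) (fun k i j => Y k i j ω) n i) := by
  induction n generalizing i with
  | zero => exact measurable_const
  | succ n ih =>
    have ih' := ih (fun k hk => hY k (by omega))
    apply measurable_of_Ioi
    intro y
    have : ((fun ω => brw N (fun _ => 0) (fun k i j => Y k i j ω) (n + 1) i) ⁻¹' Ioi y) =
        {ω | N * 2 ≤ N + i + ∑ q : Fin N × Fin 2,
          if y < brw N (fun _ => 0) (fun k i j => Y k i j ω) n q.1 + Y n q.1 q.2 ω
            then 1 else 0} := by
      ext ω
      exact brwStep_gt_iff N _ _ i y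
    rw [this]
    refine measurableSet_le measurable_const (measurable_const.add ?_)
    refine Finset.measurable_sum _ fun q _ => ?_
    refine Measurable.ite ?_ measurable_const measurable_const
    exact measurableSet_lt measurable_const ((ih' q.1).add (hY n (by omega) q.1 q.2))

lemma measurable_brwMax {Ω : Type*} [MeasurableSpace Ω] (N : ℕ) (Y : ℕ → Fin N → Fin 2 → Ω → ℝ)
    (n : ℕ) (hY : ∀ k, k < n → ∀ i j, Measurable (Y k i j)) :
    Measurable (fun ω => brwMax N (fun k i j => Y k i j ω) n) :=
  Measurable.iSup fun i => measurable_brw N Y n hY i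

lemma measurable_dsp {Ω : Type*} [MeasurableSpace Ω] (N m : ℕ) (Y : ℕ → Fin N → Fin 2 → Ω → ℝ)
    (n : ℕ) (hY : ∀ k i j, Measurable (Y k i j)) :
    Measurable (fun ω => dsp N m (fun k i j => Y k i j ω) n) := by
  induction n using Nat.strong_induction_on with
  | _ n ih =>
    cases n with
    | zero => simp only [dsp]; exact measurable_const
    | succ n =>
      simp only [dsp]
      refine (ih n (by omega)).max ((ih (n - m) (by omega)).add ?_)
      exact Measurable.iSup fun q => hY n q.1 q.2

lemma theta_zero (N m : ℕ) (Y : ℕ → Fin N → Fin 2 → ℝ) : theta N m Y 0 = 0 := by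
  simp [theta, brwMax, brw, dsp]

lemma theta_succ (N m : ℕ) (Y : ℕ → Fin N → Fin 2 → ℝ) (n : ℕ) :
    theta N m Y (n + 1) = max (theta N m Y n) (brwMax N Y (n + 1) - dsp N m Y (n + 1)) := by
  apply le_antisymm
  · refine Finset.sup'_le _ _ fun k hk => ?_
    rw [Finset.mem_range] at hk
    rcases Nat.lt_or_ge k (n + 1) with h | h
    · exact le_max_of_le_left (Finset.le_sup' (fun k => brwMax N Y k - dsp N m Y k)
        (Finset.mem_range.2 h))
    · obtain rfl : k = n + 1 := by omega
      exact le_max_right _ _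
  · refine max_le ?_ ?_
    · refine Finset.sup'_le _ _ fun k hk => ?_
      rw [Finset.mem_range] at hk
      exact Finset.le_sup' (fun k => brwMax N Y k - dsp N m Y k) (Finset.mem_range.2 (by omega))
    · exact Finset.le_sup' (fun k => brwMax N Y k - dsp N m Y k) (Finset.mem_range.2 (by omega))

lemma le_theta (N m : ℕ) (Y : ℕ → Fin N → Fin 2 → ℝ) {k n : ℕ} (h : k ≤ n) :
    brwMax N Y k - dsp N m Y k ≤ theta N m Y n :=
  Finset.le_sup' (fun k => brwMax N Y k - dsp N m Y k) (Finset.mem_range.2 (by omega))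

lemma theta_nonneg (N m : ℕ) (Y : ℕ → Fin N → Fin 2 → ℝ) (n : ℕ) : 0 ≤ theta N m Y n := by
  have := le_theta N m Y (Nat.zero_le n)
  simpa [brwMax, brw, dsp] using this

lemma theta_mono (N m : ℕ) (Y : ℕ → Fin N → Fin 2 → ℝ) (n : ℕ) :
    theta N m Y n ≤ theta N m Y (n + 1) := by
  rw [theta_succ]; exact le_max_left _ _

lemma measurable_theta {Ω : Type*} [MeasurableSpace Ω] (N m : ℕ) (Y : ℕ → Fin N → Fin 2 → Ω → ℝ)
    (n : ℕ) (hY : ∀ k i j, Measurable (Y k i j)) :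
    Measurable (fun ω => theta N m (fun k i j => Y k i j ω) n) := by
  induction n with
  | zero => simp only [theta_zero]; exact measurable_const
  | succ n ih =>
    simp only [theta_succ]
    exact ih.max ((measurable_brwMax N Y _ fun k _ => hY k).sub (measurable_dsp N m Y _ hY))

/-- If `θ` increases by more than `x`, then some particle which is at distance at least `x`
above the old maximum makes a jump larger than `x`. -/
lemma theta_incr (N m : ℕ) (hN : 1 ≤ N) (Y : ℕ → Fin N → Fin 2 → ℝ) (n : ℕ) (x : ℝ) (hx : 0 ≤ x)
    (h : x < theta N m Y (n + 1) - theta N m Y n) :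
    ∃ i j, x < brw N (fun _ => 0) Y n i - brwMax N Y (n - m) ∧ x < Y n i j := by
  have : Nonempty (Fin N) := ⟨⟨0, hN⟩⟩
  rw [theta_succ] at h
  have h1 : theta N m Y n + x < brwMax N Y (n + 1) - dsp N m Y (n + 1) := by
    rcases le_total (theta N m Y n) (brwMax N Y (n + 1) - dsp N m Y (n + 1)) with h' | h'
    · rw [max_eq_right h'] at h; linarith
    · rw [max_eq_left h'] at h; linarith
  obtain ⟨i, hi⟩ := exists_eq_ciSup_of_finite (f := brw N (fun _ => 0) Y (n + 1))
  obtain ⟨i', j', hij⟩ := brwStep_mem N (brw N (fun _ => 0) Y n) (Y n) i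
  have hM : brwMax N Y (n + 1) = brw N (fun _ => 0) Y n i' + Y n i' j' := by
    rw [← hij]; exact hi.symm
  have h2 : brw N (fun _ => 0) Y n i' ≤ brwMax N Y n :=
    le_ciSup (f := brw N (fun _ => 0) Y n) (Set.finite_range _).bddAbove i'
  have h3 : Y n i' j' ≤ ⨆ q : Fin N × Fin 2, Y n q.1 q.2 :=
    le_ciSup (f := fun q : Fin N × Fin 2 => Y n q.1 q.2) (Set.finite_range _).bddAbove (i', j')
  have h4 : dsp N m Y n ≤ dsp N m Y (n + 1) := by rw [dsp]; exact le_max_left _ _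
  have h5 : dsp N m Y (n - m) + ⨆ q : Fin N × Fin 2, Y n q.1 q.2 ≤ dsp N m Y (n + 1) := by
    rw [dsp.eq_def N m Y (n + 1)]; exact le_max_right _ _
  have h6 := le_theta N m Y (le_refl n)
  have h7 := le_theta N m Y (Nat.sub_le n m)
  refine ⟨i', j', ?_, ?_⟩ <;> linarith

/-- Splitting an expectation using independence. -/
lemma lintegral_add_indep {Ω : Type*} [MeasurableSpace Ω] (P : Measure Ω) [IsProbabilityMeasure P]
    (A B : Ω → ℝ) (hA : Measurable A) (hB : Measurable B) (hAB : IndepFun A B P)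
    (f : ℝ → ENNReal) (hf : Measurable f) :
    ∫⁻ ω, f (A ω + B ω) ∂P = ∫⁻ z, ∫⁻ ω, f (A ω + z) ∂P ∂(Measure.map B P) := by
  have h := (indepFun_iff_map_prod_eq_prod_map_map hA.aemeasurable hB.aemeasurable).1 hAB
  have hg : Measurable (fun q : ℝ × ℝ => f (q.1 + q.2)) := hf.comp (measurable_fst.add measurable_snd)
  have : IsProbabilityMeasure (Measure.map A P) := Measure.isProbabilityMeasure_map hA.aemeasurable
  have : IsProbabilityMeasure (Measure.map B P) := Measure.isProbabilityMeasure_map hB.aemeasurable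
  calc ∫⁻ ω, f (A ω + B ω) ∂P
      = ∫⁻ q : ℝ × ℝ, f (q.1 + q.2) ∂(Measure.map (fun ω => (A ω, B ω)) P) := by
        rw [lintegral_map hg (hA.prodMk hB)]
    _ = ∫⁻ z, ∫⁻ a, f (a + z) ∂(Measure.map A P) ∂(Measure.map B P) := by
        rw [h, lintegral_prod_symm' _ hg]
    _ = _ := by
        refine lintegral_congr fun z => ?_
        exact lintegral_map (f := fun a => f (a + z)) (hf.comp (measurable_id.add_const z)) hA

section prob

variable {Ω : Type*} [MeasurableSpace Ω] (P : Measure Ω) [IsProbabilityMeasure P]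

set_option linter.unusedSectionVars false

/-- The past before time `n`. -/
@[reducible] def past (N : ℕ) (Y : ℕ → Fin N → Fin 2 → Ω → ℝ) (n : ℕ) : MeasurableSpace Ω :=
  ⨆ q ∈ {q : ℕ × Fin N × Fin 2 | q.1 < n},
    MeasurableSpace.comap (Y q.1 q.2.1 q.2.2) inferInstance

lemma past_indep (N : ℕ) (Y : ℕ → Fin N → Fin 2 → Ω → ℝ) (hYm : ∀ k i j, Measurable (Y k i j))
    (hYi : iIndepFun (fun q : ℕ × Fin N × Fin 2 => Y q.1 q.2.1 q.2.2) P) (n : ℕ) (i : Fin N)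
    (j : Fin 2) (A : Ω → ℝ) (hA : Measurable[past N Y n] A) : IndepFun A (Y n i j) P := by
  have h := indep_iSup_of_disjoint (fun q : ℕ × Fin N × Fin 2 => (hYm q.1 q.2.1 q.2.2).comap_le)
    hYi.iIndep (S := {q : ℕ × Fin N × Fin 2 | q.1 < n}) (T := {(n, i, j)}) (by
      rw [Set.disjoint_singleton_right]; simp)
  rw [IndepFun_iff_Indep]
  refine indep_of_indep_of_le_left (indep_of_indep_of_le_right h ?_) ?_
  · simp
  · exact hA.comap_le

lemma past_measurable (N : ℕ) (Y : ℕ → Fin N → Fin 2 → Ω → ℝ) {k n : ℕ} (hk : k < n) (i : Fin N)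
    (j : Fin 2) : Measurable[past N Y n] (Y k i j) := by
  rw [measurable_iff_comap_le]
  exact le_iSup₂_of_le (f := fun (q : ℕ × Fin N × Fin 2)
    (_ : q ∈ {q : ℕ × Fin N × Fin 2 | q.1 < n}) =>
    MeasurableSpace.comap (Y q.1 q.2.1 q.2.2) inferInstance) (k, i, j) hk le_rfl

lemma brw_indep (N : ℕ) (Y : ℕ → Fin N → Fin 2 → Ω → ℝ) (hYm : ∀ k i j, Measurable (Y k i j))
    (hYi : iIndepFun (fun q : ℕ × Fin N × Fin 2 => Y q.1 q.2.1 q.2.2) P) (s n : ℕ) (hs : s ≤ n)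
    (i i' : Fin N) (j : Fin 2) :
    IndepFun (fun ω => brw N (fun _ => 0) (fun k i j => Y k i j ω) n i' -
      brwMax N (fun k i j => Y k i j ω) s) (Y n i j) P := by
  refine past_indep P N Y hYm hYi n i j _ ?_
  refine Measurable.sub ?_ ?_
  · exact @measurable_brw Ω (past N Y n) N Y n (fun k hk i j => past_measurable N Y hk i j) i'
  · exact @measurable_brwMax Ω (past N Y n) N Y s
      (fun k hk i j => past_measurable N Y (hk.trans_le hs) i j)

/-- Many-to-one estimate. -/
lemma many_to_one (N : ℕ) (hN : 1 ≤ N) (Y : ℕ → Fin N → Fin 2 → Ω → ℝ)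
    (hYm : ∀ k i j, Measurable (Y k i j))
    (hYi : iIndepFun (fun q : ℕ × Fin N × Fin 2 => Y q.1 q.2.1 q.2.2) P)
    (ν : Measure ℝ) (hν : ∀ k i j, Measure.map (Y k i j) P = ν) (s k : ℕ) :
    ∀ f : ℝ → ENNReal, Monotone f →
    ∫⁻ ω, ∑ i, f (brw N (fun _ => 0) (fun k i j => Y k i j ω) (s + k) i -
        brwMax N (fun k i j => Y k i j ω) s) ∂P ≤
      (N * 2 ^ k : ENNReal) * ∫⁻ ω, f (∑ l ∈ Finset.range k, Y l ⟨0, hN⟩ 0 ω) ∂P := by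
  induction k with
  | zero =>
    intro f hf
    simp only [Finset.range_zero, Finset.sum_empty, lintegral_const, measure_univ, mul_one,
      pow_zero, add_zero]
    calc _ ≤ ∫⁻ ω, (N : ENNReal) * f 0 ∂P := by
          refine lintegral_mono fun ω => ?_
          calc _ ≤ ∑ i : Fin N, f 0 := by
                refine Finset.sum_le_sum fun i _ => hf ?_
                have := le_ciSup (f := brw N (fun _ => 0) (fun k i j => Y k i j ω) s)
                  (Set.finite_range _).bddAbove i
                have h2 : brw N (fun _ => 0) (fun k i j => Y k i j ω) s i ≤
                  brwMax N (fun k i j => Y k i j ω) s := this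
                linarith
            _ = _ := by simp
      _ = _ := by simp
  | succ k ih =>
    intro f hf
    have hfm : Measurable f := hf.measurable
    have hBm : ∀ i, Measurable (fun ω => brw N (fun _ => 0) (fun k i j => Y k i j ω) (s + k) i -
        brwMax N (fun k i j => Y k i j ω) s) := fun i =>
      (measurable_brw N Y _ (fun k _ => hYm k) i).sub (measurable_brwMax N Y _ (fun k _ => hYm k))
    have hSm : Measurable (fun ω => ∑ l ∈ Finset.range k, Y l ⟨0, hN⟩ 0 ω) :=
      Finset.measurable_sum _ fun l _ => hYm l _ _
    have : IsProbabilityMeasure ν := by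
      rw [← hν 0 ⟨0, hN⟩ 0]; exact Measure.isProbabilityMeasure_map (hYm _ _ _).aemeasurable
    have hS : ∫⁻ ω, f (∑ l ∈ Finset.range (k + 1), Y l ⟨0, hN⟩ 0 ω) ∂P =
        ∫⁻ z, ∫⁻ ω, f (∑ l ∈ Finset.range k, Y l ⟨0, hN⟩ 0 ω + z) ∂P ∂ν := by
      simp only [Finset.sum_range_succ]
      rw [lintegral_add_indep P _ _ hSm (hYm k ⟨0, hN⟩ 0) ?_ f hfm, hν]
      refine past_indep P N Y hYm hYi k _ _ _ ?_
      refine Finset.measurable_sum _ fun l hl => ?_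
      exact past_measurable N Y (Finset.mem_range.1 hl) _ _
    rw [hS]
    calc ∫⁻ ω, ∑ i, f (brw N (fun _ => 0) (fun k i j => Y k i j ω) (s + (k + 1)) i -
        brwMax N (fun k i j => Y k i j ω) s) ∂P
        ≤ ∫⁻ ω, ∑ i, ∑ j, f ((brw N (fun _ => 0) (fun k i j => Y k i j ω) (s + k) i -
            brwMax N (fun k i j => Y k i j ω) s) + Y (s + k) i j ω) ∂P := by
          refine lintegral_mono fun ω => ?_
          refine (brwStep_sum_le N (brw N (fun _ => 0) (fun k i j => Y k i j ω) (s + k))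
            (fun i j => Y (s + k) i j ω)
            (fun y => f (y - brwMax N (fun k i j => Y k i j ω) s))).trans ?_
          refine Finset.sum_le_sum fun i _ => Finset.sum_le_sum fun j _ => ?_
          apply le_of_eq
          congr 1
          ring
      _ = ∑ i, ∑ j : Fin 2, ∫⁻ z, ∫⁻ ω, f ((brw N (fun _ => 0) (fun k i j => Y k i j ω) (s + k) i -
            brwMax N (fun k i j => Y k i j ω) s) + z) ∂P ∂ν := by
          rw [lintegral_finsetSum]
          swap
          · intro i _
            exact Finset.measurable_sum _ fun j _ => hfm.comp ((hBm i).add (hYm _ _ _))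
          refine Finset.sum_congr rfl fun i _ => ?_
          rw [lintegral_finsetSum]
          swap
          · intro j _
            exact hfm.comp ((hBm i).add (hYm _ _ _))
          refine Finset.sum_congr rfl fun j _ => ?_
          rw [lintegral_add_indep P _ _ (hBm i) (hYm (s + k) i j) ?_ f hfm, hν]
          exact brw_indep P N Y hYm hYi s (s + k) (by omega) i i j
      _ = 2 * ∫⁻ z, ∫⁻ ω, ∑ i, f ((brw N (fun _ => 0) (fun k i j => Y k i j ω) (s + k) i -
            brwMax N (fun k i j => Y k i j ω) s) + z) ∂P ∂ν := by
          simp only [Finset.sum_const, Finset.card_univ, Fintype.card_fin, nsmul_eq_mul]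
          rw [← Finset.mul_sum, ← lintegral_finsetSum]
          · norm_num
            congr 1
            refine lintegral_congr fun z => ?_
            rw [lintegral_finsetSum]
            intro i _
            exact hfm.comp ((hBm i).add_const z)
          · intro i _
            refine Measurable.lintegral_prod_right' (f := fun q : ℝ × Ω =>
              f ((brw N (fun _ => 0) (fun k i j => Y k i j q.2) (s + k) i -
                brwMax N (fun k i j => Y k i j q.2) s) + q.1)) ?_
            exact hfm.comp (((hBm i).comp measurable_snd).add measurable_fst)
      _ ≤ 2 * ∫⁻ z, (N * 2 ^ k : ENNReal) *
            ∫⁻ ω, f (∑ l ∈ Finset.range k, Y l ⟨0, hN⟩ 0 ω + z) ∂P ∂ν := by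
          gcongr with z
          exact ih (fun y => f (y + z)) (fun a b hab => hf (by linarith))
      _ = _ := by
          rw [lintegral_const_mul]
          · rw [← mul_assoc]
            congr 1
            ring
          · refine Measurable.lintegral_prod_right' (f := fun q : ℝ × Ω =>
              f (∑ l ∈ Finset.range k, Y l ⟨0, hN⟩ 0 q.2 + q.1)) ?_
            exact hfm.comp ((hSm.comp measurable_snd).add measurable_fst)

/-- One big jump or two moderately big jumps. -/
lemma sum_gt (k m : ℕ) (hm : 1 ≤ m) (hkm : k ≤ m) (a : ℕ → ℝ) (ha : ∀ l, 0 ≤ a l) (x : ℝ)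
    (hx : 0 < x) (h : x < ∑ l ∈ Finset.range k, a l) :
    (∃ l ∈ Finset.range m, x / 2 < a l) ∨
      ∃ l ∈ Finset.range m, ∃ l' ∈ Finset.range m, l ≠ l' ∧ x / (2 * m) < a l ∧
        x / (2 * m) < a l' := by
  by_contra! hcon
  obtain ⟨h1, h2⟩ := hcon
  have hm0 : (0 : ℝ) < m := by exact_mod_cast hm
  have hle : ∑ l ∈ Finset.range k, a l ≤ ∑ l ∈ Finset.range m, a l :=
    Finset.sum_le_sum_of_subset_of_nonneg (Finset.range_mono hkm) fun l _ _ => ha l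
  have h3 : ∑ l ∈ Finset.range m, a l ≤ x := by
    by_cases hex : ∃ l ∈ Finset.range m, x / (2 * m) < a l
    · obtain ⟨l, hl, hal⟩ := hex
      rw [← Finset.add_sum_erase _ _ hl]
      have : ∑ l' ∈ (Finset.range m).erase l, a l' ≤
          ∑ l' ∈ (Finset.range m).erase l, x / (2 * m) := by
        refine Finset.sum_le_sum fun l' hl' => ?_
        rw [Finset.mem_erase] at hl'
        exact h2 l hl l' hl'.2 (Ne.symm hl'.1) hal
      have h4 : ∑ l' ∈ (Finset.range m).erase l, x / (2 * m) ≤ x / 2 := by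
        calc _ ≤ ∑ l' ∈ (Finset.range m), x / (2 * m) := by
              refine Finset.sum_le_sum_of_subset_of_nonneg (Finset.erase_subset _ _)
                fun _ _ _ => by positivity
          _ = x / 2 := by
              rw [Finset.sum_const, Finset.card_range, nsmul_eq_mul]; field_simp
      have := h1 l hl
      linarith
    · push Not at hex
      calc _ ≤ ∑ l' ∈ (Finset.range m), x / (2 * m) := Finset.sum_le_sum hex
        _ = x / 2 := by
              rw [Finset.sum_const, Finset.card_range, nsmul_eq_mul]; field_simp
        _ ≤ x := by linarith
  linarith

lemma sum_tail (N : ℕ) (hN : 1 ≤ N) (Y : ℕ → Fin N → Fin 2 → Ω → ℝ)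
    (hYm : ∀ k i j, Measurable (Y k i j)) (hY0 : ∀ k i j ω, 0 ≤ Y k i j ω)
    (hYi : iIndepFun (fun q : ℕ × Fin N × Fin 2 => Y q.1 q.2.1 q.2.2) P)
    (ν : Measure ℝ) (hν : ∀ k i j, Measure.map (Y k i j) P = ν)
    (k m : ℕ) (hm : 1 ≤ m) (hkm : k ≤ m) (x : ℝ) (hx : 0 < x) :
    P {ω | x < ∑ l ∈ Finset.range k, Y l ⟨0, hN⟩ 0 ω} ≤
      m * ν (Ioi (x / 2)) + m * (m * (ν (Ioi (x / (2 * m))) * ν (Ioi (x / (2 * m))))) := by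
  have hpre : ∀ l i j y, P {ω | y < Y l i j ω} = ν (Ioi y) := by
    intro l i j y
    rw [← hν l i j, Measure.map_apply (hYm l i j) measurableSet_Ioi]
    rfl
  have hsub : {ω | x < ∑ l ∈ Finset.range k, Y l ⟨0, hN⟩ 0 ω} ⊆
      (⋃ l ∈ Finset.range m, {ω | x / 2 < Y l ⟨0, hN⟩ 0 ω}) ∪
      ⋃ l ∈ Finset.range m, ⋃ l' ∈ Finset.range m, {ω | l ≠ l' ∧ x / (2 * m) < Y l ⟨0, hN⟩ 0 ω ∧
        x / (2 * m) < Y l' ⟨0, hN⟩ 0 ω} := by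
    intro ω hω
    rcases sum_gt k m hm hkm (fun l => Y l ⟨0, hN⟩ 0 ω) (fun l => hY0 _ _ _ _) x hx hω with
      ⟨l, hl, h⟩ | ⟨l, hl, l', hl', hne, h1, h2⟩
    · left
      simp only [mem_iUnion, mem_ofPred_eq]
      exact ⟨l, hl, h⟩
    · right
      simp only [mem_iUnion, mem_ofPred_eq]
      exact ⟨l, hl, l', hl', hne, h1, h2⟩
  refine (measure_mono hsub).trans ((measure_union_le _ _).trans (add_le_add ?_ ?_))
  · refine (measure_biUnion_finset_le _ _).trans ?_
    simp only [hpre]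
    simp
  · refine (measure_biUnion_finset_le _ _).trans ?_
    calc _ ≤ ∑ l ∈ Finset.range m,
          (m * (ν (Ioi (x / (2 * m))) * ν (Ioi (x / (2 * m)))) : ENNReal) := by
          refine Finset.sum_le_sum fun l hl => ?_
          refine (measure_biUnion_finset_le _ _).trans ?_
          calc _ ≤ ∑ l' ∈ Finset.range m,
              (ν (Ioi (x / (2 * m))) * ν (Ioi (x / (2 * m))) : ENNReal) := by
                refine Finset.sum_le_sum fun l' hl' => ?_
                by_cases hne : l = l'
                · simp [hne]
                · have hind : IndepFun (Y l ⟨0, hN⟩ 0) (Y l' ⟨0, hN⟩ 0) P :=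
                    hYi.indepFun (i := (l, ⟨0, hN⟩, 0)) (j := (l', ⟨0, hN⟩, 0)) (by simp [hne])
                  have h := hind.measure_inter_preimage_eq_mul (Ioi (x / (2 * m)))
                    (Ioi (x / (2 * m))) measurableSet_Ioi measurableSet_Ioi
                  rw [← hpre l ⟨0, hN⟩ 0]
                  nth_rewrite 2 [hpre l ⟨0, hN⟩ 0]
                  rw [← hpre l' ⟨0, hN⟩ 0]
                  refine le_trans (measure_mono ?_) h.le
                  rintro ω ⟨_, h1, h2⟩
                  exact ⟨h1, h2⟩
            _ = _ := by simp
      _ = _ := by simp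

lemma incr_tail (N : ℕ) (hN : 1 ≤ N) (Y : ℕ → Fin N → Fin 2 → Ω → ℝ)
    (hYm : ∀ k i j, Measurable (Y k i j)) (hY0 : ∀ k i j ω, 0 ≤ Y k i j ω)
    (hYi : iIndepFun (fun q : ℕ × Fin N × Fin 2 => Y q.1 q.2.1 q.2.2) P)
    (ν : Measure ℝ) (hν : ∀ k i j, Measure.map (Y k i j) P = ν)
    (n m : ℕ) (hm : 1 ≤ m) (x : ℝ) (hx : 0 < x) :
    P {ω | x < theta N m (fun k i j => Y k i j ω) (n + 1) - theta N m (fun k i j => Y k i j ω) n} ≤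
      2 * ((N * 2 ^ m) * (m * ν (Ioi (x / 2)) +
        m * (m * (ν (Ioi (x / (2 * m))) * ν (Ioi (x / (2 * m))))))) * ν (Ioi x) := by
  have hpre : ∀ l i j y, P {ω | y < Y l i j ω} = ν (Ioi y) := by
    intro l i j y
    rw [← hν l i j, Measure.map_apply (hYm l i j) measurableSet_Ioi]
    rfl
  set f : ℝ → ENNReal := (Ioi x).indicator 1 with hf
  have hfmono : Monotone f := by
    intro a b hab
    by_cases ha : x < a
    · simp [hf, ha, ha.trans_le hab]
    · simp [hf, ha]
  set D : Fin N → Ω → ℝ := fun i ω => brw N (fun _ => 0) (fun k i j => Y k i j ω) n i -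
        brwMax N (fun k i j => Y k i j ω) (n - m) with hD
  have hDm : ∀ i, Measurable (D i) := fun i =>
      (measurable_brw N Y _ (fun k _ => hYm k) i).sub (measurable_brwMax N Y _ (fun k _ => hYm k))
  have hsub : {ω | x < theta N m (fun k i j => Y k i j ω) (n + 1) -
      theta N m (fun k i j => Y k i j ω) n} ⊆
      ⋃ i, ⋃ j, (D i ⁻¹' Ioi x ∩ Y n i j ⁻¹' Ioi x) := by
    intro ω hω
    obtain ⟨i, j, h1, h2⟩ := theta_incr N m hN (fun k i j => Y k i j ω) n x hx.le hω
    simp only [mem_iUnion]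
    exact ⟨i, j, h1, h2⟩
  have hcount : ∑ i, P (D i ⁻¹' Ioi x) ≤ (N * 2 ^ m) * (m * ν (Ioi (x / 2)) +
        m * (m * (ν (Ioi (x / (2 * m))) * ν (Ioi (x / (2 * m)))))) := by
    obtain ⟨k, hk, hkm⟩ : ∃ k, n - m + k = n ∧ k ≤ m := ⟨n - (n - m), by omega, by omega⟩
    have h := many_to_one P N hN Y hYm hYi ν hν (n - m) k f hfmono
    rw [hk] at h
    have h1 : ∫⁻ ω, ∑ i, f (D i ω) ∂P = ∑ i, P (D i ⁻¹' Ioi x) := by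
      rw [lintegral_finsetSum]
      swap
      · intro i _
        exact hfmono.measurable.comp (hDm i)
      refine Finset.sum_congr rfl fun i _ => ?_
      rw [← lintegral_indicator_one ((hDm i) measurableSet_Ioi)]
      rfl
    have h2 : ∫⁻ ω, f (∑ l ∈ Finset.range k, Y l ⟨0, hN⟩ 0 ω) ∂P =
        P {ω | x < ∑ l ∈ Finset.range k, Y l ⟨0, hN⟩ 0 ω} := by
      have hSm : Measurable (fun ω => ∑ l ∈ Finset.range k, Y l ⟨0, hN⟩ 0 ω) :=
        Finset.measurable_sum _ fun l _ => hYm l _ _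
      rw [← lintegral_indicator_one (measurableSet_lt measurable_const hSm)]
      rfl
    rw [h1, h2] at h
    refine h.trans ?_
    have := sum_tail P N hN Y hYm hY0 hYi ν hν k m hm hkm x hx
    gcongr
    norm_num
  calc _ ≤ P (⋃ i, ⋃ j, (D i ⁻¹' Ioi x ∩ Y n i j ⁻¹' Ioi x)) := measure_mono hsub
    _ ≤ ∑ i, ∑ j : Fin 2, P (D i ⁻¹' Ioi x) * ν (Ioi x) := by
        refine (measure_iUnion_fintype_le _ _).trans (Finset.sum_le_sum fun i _ => ?_)
        refine (measure_iUnion_fintype_le _ _).trans (Finset.sum_le_sum fun j _ => ?_)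
        rw [(brw_indep P N Y hYm hYi (n - m) n (Nat.sub_le _ _) i i j).measure_inter_preimage_eq_mul
          _ _ measurableSet_Ioi measurableSet_Ioi, ← hpre n i j]
        rfl
    _ = 2 * (∑ i, P (D i ⁻¹' Ioi x)) * ν (Ioi x) := by
        simp only [Finset.sum_const, Finset.card_univ, Fintype.card_fin, nsmul_eq_mul]
        rw [← Finset.mul_sum, ← Finset.sum_mul, ← mul_assoc]
        norm_num
    _ ≤ _ := by gcongr

end prob

/-- From tail bounds to moments. -/
lemma moment_of_tail {Ω : Type*} [MeasurableSpace Ω] (P : Measure Ω) [IsProbabilityMeasure P]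
    (D : Ω → ℝ) (hD : Measurable D) (hD0 : ∀ ω, 0 ≤ D ω) (p q x₀ : ℝ) (hp : 0 < p) (hpq : p < q)
    (hx₀ : 0 < x₀) (h : ∀ x, x₀ ≤ x → P {ω | x < D ω} ≤ ENNReal.ofReal ((x / x₀) ^ (-q))) :
    ∫⁻ ω, ENNReal.ofReal (D ω ^ p) ∂P ≤ ENNReal.ofReal ((1 + p / (q - p)) * x₀ ^ p) := by
  rw [lintegral_rpow_eq_lintegral_meas_lt_mul P (Filter.Eventually.of_forall hD0) hD.aemeasurable hp]
  have hsplit : Ioi (0 : ℝ) = Ioc 0 x₀ ∪ Ioi x₀ := (Ioc_union_Ioi_eq_Ioi hx₀.le).symm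
  have hint1 : IntegrableOn (fun t : ℝ => t ^ (p - 1)) (Ioc 0 x₀) volume := by
    have := intervalIntegral.intervalIntegrable_rpow' (a := 0) (b := x₀) (r := p - 1) (by linarith)
    rwa [intervalIntegrable_iff_integrableOn_Ioc_of_le hx₀.le] at this
  have hint2 : IntegrableOn (fun t : ℝ => x₀ ^ q * t ^ (p - 1 - q)) (Ioi x₀) volume :=
    (integrableOn_Ioi_rpow_of_lt (by linarith) hx₀).const_mul _
  have e1 : ∫⁻ t in Ioc 0 x₀, P {a | t < D a} * ENNReal.ofReal (t ^ (p - 1)) ≤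
      ENNReal.ofReal (x₀ ^ p / p) := by
    calc _ ≤ ∫⁻ t in Ioc 0 x₀, ENNReal.ofReal (t ^ (p - 1)) := by
          refine lintegral_mono fun t => ?_
          calc _ ≤ 1 * ENNReal.ofReal (t ^ (p - 1)) := by gcongr; exact prob_le_one
            _ = _ := one_mul _
      _ = ENNReal.ofReal (∫ t in Ioc 0 x₀, t ^ (p - 1)) := by
          rw [ofReal_integral_eq_lintegral_ofReal hint1]
          filter_upwards [ae_restrict_mem measurableSet_Ioc] with t ht
          exact Real.rpow_nonneg ht.1.le _
      _ = _ := by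
          rw [← intervalIntegral.integral_of_le hx₀.le, integral_rpow (Or.inl (by linarith))]
          rw [sub_add_cancel, Real.zero_rpow hp.ne', sub_zero]
  have e2 : ∫⁻ t in Ioi x₀, P {a | t < D a} * ENNReal.ofReal (t ^ (p - 1)) ≤
      ENNReal.ofReal (x₀ ^ p / (q - p)) := by
    calc _ ≤ ∫⁻ t in Ioi x₀, ENNReal.ofReal (x₀ ^ q * t ^ (p - 1 - q)) := by
          refine setLIntegral_mono' measurableSet_Ioi fun t ht => ?_
          have ht' : x₀ < t := ht
          have ht0 : 0 < t := hx₀.trans ht'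
          calc _ ≤ ENNReal.ofReal ((t / x₀) ^ (-q)) * ENNReal.ofReal (t ^ (p - 1)) := by
                gcongr; exact h t ht'.le
            _ = _ := by
                rw [← ENNReal.ofReal_mul (by positivity)]
                congr 1
                rw [Real.div_rpow ht0.le hx₀.le, Real.rpow_neg hx₀.le, Real.rpow_sub ht0 (p - 1) q,
                  Real.rpow_neg ht0.le]
                field_simp
      _ = ENNReal.ofReal (∫ t in Ioi x₀, x₀ ^ q * t ^ (p - 1 - q)) := by
          rw [ofReal_integral_eq_lintegral_ofReal hint2]
          filter_upwards [ae_restrict_mem measurableSet_Ioi] with t ht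
          have ht0 : 0 < t := hx₀.trans ht
          positivity
      _ = _ := by
          rw [integral_const_mul, integral_Ioi_rpow_of_lt (by linarith) hx₀]
          congr 1
          have h1 : p - 1 - q + 1 = p - q := by ring
          have h2 : p - q ≠ 0 := by linarith
          have h3 : q - p ≠ 0 := by linarith
          rw [h1, Real.rpow_sub hx₀]
          field_simp
          ring
  calc _ ≤ ENNReal.ofReal p * (ENNReal.ofReal (x₀ ^ p / p) + ENNReal.ofReal (x₀ ^ p / (q - p))) := by
        gcongr
        rw [hsplit]
        exact (lintegral_union_le _ _ _).trans (add_le_add e1 e2)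
    _ = _ := by
        have h3 : 0 < q - p := by linarith
        rw [← ENNReal.ofReal_add (by positivity) (by positivity), ← ENNReal.ofReal_mul hp.le]
        congr 1
        field_simp

lemma theta_moment {Ω : Type*} [MeasurableSpace Ω] (P : Measure Ω) [IsProbabilityMeasure P]
    (N m : ℕ) (Y : ℕ → Fin N → Fin 2 → Ω → ℝ) (hYm : ∀ k i j, Measurable (Y k i j))
    (p : ℝ) (hp0 : 0 < p) (hp1 : p ≤ 1) (K : ℝ) (hK : 0 ≤ K)
    (h : ∀ n, ∫⁻ ω, ENNReal.ofReal ((theta N m (fun k i j => Y k i j ω) (n + 1) -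
      theta N m (fun k i j => Y k i j ω) n) ^ p) ∂P ≤ ENNReal.ofReal K) (n : ℕ) :
    ∫⁻ ω, ENNReal.ofReal ((theta N m (fun k i j => Y k i j ω) n) ^ p) ∂P ≤
      ENNReal.ofReal (n * K) := by
  induction n with
  | zero => simp [theta_zero, Real.zero_rpow hp0.ne']
  | succ n ih =>
    have hm := fun n => measurable_theta N m Y n hYm
    calc _ ≤ ∫⁻ ω, (ENNReal.ofReal ((theta N m (fun k i j => Y k i j ω) n) ^ p) +
          ENNReal.ofReal ((theta N m (fun k i j => Y k i j ω) (n + 1) -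
            theta N m (fun k i j => Y k i j ω) n) ^ p)) ∂P := by
          refine lintegral_mono fun ω => ?_
          have h1 := theta_nonneg N m (fun k i j => Y k i j ω) n
          have h2 := sub_nonneg.2 (theta_mono N m (fun k i j => Y k i j ω) n)
          rw [← ENNReal.ofReal_add (Real.rpow_nonneg h1 _) (Real.rpow_nonneg h2 _)]
          refine ENNReal.ofReal_le_ofReal ?_
          have := Real.rpow_add_le_add_rpow h1 h2 hp0.le hp1
          simpa using this
      _ ≤ ENNReal.ofReal (n * K) + ENNReal.ofReal K := by
          rw [lintegral_add_left ((hm n).pow_const p).ennreal_ofReal]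
          exact add_le_add ih (h n)
      _ = _ := by
          rw [← ENNReal.ofReal_add (by positivity) hK]
          congr 1
          push_cast
          ring

lemma final_bound {Ω : Type*} [MeasurableSpace Ω] (P : Measure Ω) [IsProbabilityMeasure P]
    (N m : ℕ) (Y : ℕ → Fin N → Fin 2 → Ω → ℝ) (hYm : ∀ k i j, Measurable (Y k i j))
    (p : ℝ) (hp0 : 0 < p) (n : ℕ) (K : ℝ) (hK : 0 ≤ K)
    (h : ∫⁻ ω, ENNReal.ofReal ((theta N m (fun k i j => Y k i j ω) n) ^ p) ∂P ≤
      ENNReal.ofReal K) :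
    (∫ ω, (theta N m (fun k i j => Y k i j ω) n) ^ p ∂P) ≤ K ∧
    (∫ ω, (max (brwMax N (fun k i j => Y k i j ω) n -
            dsp N m (fun k i j => Y k i j ω) n) 0) ^ p ∂P) ≤ K := by
  have hm := measurable_theta N m Y n hYm
  have hm2 : Measurable (fun ω => max (brwMax N (fun k i j => Y k i j ω) n -
            dsp N m (fun k i j => Y k i j ω) n) 0) :=
    ((measurable_brwMax N Y _ fun k _ => hYm k).sub (measurable_dsp N m Y _ hYm)).max
      measurable_const
  constructor
  · rw [integral_eq_lintegral_of_nonneg_ae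
      (Filter.Eventually.of_forall fun ω => Real.rpow_nonneg (theta_nonneg _ _ _ _) _)
      (hm.pow_const p).aestronglyMeasurable]
    exact ENNReal.toReal_le_of_le_ofReal hK h
  · rw [integral_eq_lintegral_of_nonneg_ae
      (Filter.Eventually.of_forall fun ω => Real.rpow_nonneg (le_max_right _ _) _)
      (hm2.pow_const p).aestronglyMeasurable]
    refine ENNReal.toReal_le_of_le_ofReal hK (le_trans (lintegral_mono fun ω => ?_) h)
    refine ENNReal.ofReal_le_ofReal ?_
    refine Real.rpow_le_rpow (le_max_right _ _) ?_ hp0.le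
    exact max_le (le_theta _ _ _ le_rfl) (theta_nonneg _ _ _ _)

/-- Potter bounds for a monotone regularly varying function. -/
lemma potter (T : ℝ → ℝ) (hT : Antitone T) (hT0 : ∀ x, 0 ≤ T x) (α η : ℝ) (hη : 0 < η)
    (hηα : η < α) (hRV : Tendsto (fun x => T x / T (2 * x)) atTop (nhds ((2 : ℝ) ^ α))) :
    ∃ C t₀ : ℝ, 1 ≤ C ∧ 1 ≤ t₀ ∧ (∀ a, t₀ ≤ a → 0 < T a) ∧ ∀ a, t₀ ≤ a → ∀ l : ℝ, 1 ≤ l →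
      T (l * a) ≤ C * l ^ (-(α - η)) * T a ∧ T a ≤ C * l ^ (α + η) * T (l * a) := by
  set r₁ : ℝ := 2 ^ (α - η) with hr₁
  set r₂ : ℝ := 2 ^ (α + η) with hr₂
  have h1 : r₁ < 2 ^ α := Real.rpow_lt_rpow_of_exponent_lt (by norm_num) (by linarith)
  have h2 : (2 : ℝ) ^ α < r₂ := Real.rpow_lt_rpow_of_exponent_lt (by norm_num) (by linarith)
  have hr₁1 : 1 ≤ r₁ := Real.one_le_rpow (by norm_num) (by linarith)
  have hr₂1 : 1 ≤ r₂ := Real.one_le_rpow (by norm_num) (by linarith)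
  have hr₁0 : 0 < r₁ := by linarith
  have hr₂0 : 0 < r₂ := by linarith
  obtain ⟨t₁, ht₁⟩ := Filter.eventually_atTop.1
    ((hRV.eventually (lt_mem_nhds h1)).and (hRV.eventually (gt_mem_nhds h2)))
  have hpos2 : ∀ a, t₁ ≤ a → 0 < T (2 * a) := by
    intro a ha
    rcases (hT0 (2 * a)).lt_or_eq with h | h
    · exact h
    · have := (ht₁ a ha).1
      rw [← h, div_zero] at this
      linarith
  have hpos : ∀ a, max t₁ 1 ≤ a → 0 < T a := by
    intro a ha
    have ha1 : 1 ≤ a := (le_max_right _ _).trans ha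
    exact (hpos2 a ((le_max_left _ _).trans ha)).trans_le (hT (by linarith))
  have hiter : ∀ a, max t₁ 1 ≤ a → ∀ k : ℕ,
      T (2 ^ k * a) * r₁ ^ k ≤ T a ∧ T a ≤ r₂ ^ k * T (2 ^ k * a) := by
    intro a ha k
    have ha1 : 1 ≤ a := (le_max_right _ _).trans ha
    induction k with
    | zero => simp
    | succ k ih =>
      have hka : t₁ ≤ 2 ^ k * a := by
        have : (1 : ℝ) ≤ 2 ^ k := one_le_pow₀ (by norm_num)
        have h3 : t₁ ≤ a := (le_max_left _ _).trans ha
        nlinarith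
      have hp := hpos2 _ hka
      obtain ⟨h3, h4⟩ := ht₁ _ hka
      rw [lt_div_iff₀ hp] at h3
      rw [div_lt_iff₀ hp] at h4
      have e : (2 : ℝ) ^ (k + 1) * a = 2 * (2 ^ k * a) := by ring
      rw [e]
      constructor
      · calc _ = (r₁ * T (2 * (2 ^ k * a))) * r₁ ^ k := by ring
          _ ≤ T (2 ^ k * a) * r₁ ^ k := by gcongr
          _ ≤ _ := ih.1
      · calc _ ≤ r₂ ^ k * T (2 ^ k * a) := ih.2
          _ ≤ r₂ ^ k * (r₂ * T (2 * (2 ^ k * a))) := by gcongr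
          _ = _ := by ring
  refine ⟨r₂, max t₁ 1, hr₂1, le_max_right _ _, hpos, fun a ha l hl => ?_⟩
  have ha0 : 0 < a := lt_of_lt_of_le one_pos ((le_max_right _ _).trans ha)
  obtain ⟨k, hk1, hk2⟩ := exists_nat_pow_near hl (by norm_num : (1 : ℝ) < 2)
  have hl0 : 0 < l := by linarith
  have hpw : ∀ r : ℝ, ∀ k : ℕ, ((2 : ℝ) ^ k) ^ r = ((2 : ℝ) ^ r) ^ k := by
    intro r k
    rw [← Real.rpow_natCast, ← Real.rpow_natCast, ← Real.rpow_mul (by norm_num),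
      ← Real.rpow_mul (by norm_num), mul_comm]
  constructor
  · have e1 : T (l * a) ≤ T (2 ^ k * a) := hT (by gcongr)
    have e2 := (hiter a ha k).1
    have e3 : l ^ (α - η) ≤ r₁ ^ (k + 1) := by
      rw [hr₁, ← hpw]
      exact Real.rpow_le_rpow hl0.le hk2.le (by linarith)
    rw [Real.rpow_neg hl0.le]
    have e4 : 0 < l ^ (α - η) := by positivity
    have e5 : T (l * a) * l ^ (α - η) ≤ r₂ * T a := by
      calc _ ≤ T (2 ^ k * a) * r₁ ^ (k + 1) := mul_le_mul e1 e3 e4.le (hT0 _)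
        _ = r₁ * (T (2 ^ k * a) * r₁ ^ k) := by ring
        _ ≤ r₁ * T a := by gcongr
        _ ≤ r₂ * T a := mul_le_mul_of_nonneg_right (h1.trans h2).le (hT0 _)
    calc T (l * a) = T (l * a) * l ^ (α - η) * (l ^ (α - η))⁻¹ := by field_simp
      _ ≤ r₂ * T a * (l ^ (α - η))⁻¹ := by gcongr
      _ = _ := by ring
  · have e1 : T (2 ^ (k + 1) * a) ≤ T (l * a) := hT (by gcongr)
    have e2 := (hiter a ha (k + 1)).2
    have e3 : r₂ ^ k ≤ l ^ (α + η) := by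
      rw [hr₂, ← hpw]
      exact Real.rpow_le_rpow (by positivity) hk1 (by linarith)
    calc _ ≤ r₂ ^ (k + 1) * T (2 ^ (k + 1) * a) := e2
      _ = r₂ * r₂ ^ k * T (2 ^ (k + 1) * a) := by ring
      _ ≤ r₂ * l ^ (α + η) * T (l * a) := by
          have := hT0 (2 ^ (k + 1) * a)
          gcongr

lemma tendsto_natrpow (b : ℝ) (hb : 0 < b) :
    Tendsto (fun N : ℕ => (N : ℝ) ^ b) atTop atTop :=
  (tendsto_rpow_atTop hb).comp tendsto_natCast_atTop_atTop

lemma logb_rpow_small (r s κ : ℝ) (hs : 0 < s) (hκ : 0 < κ) :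
    ∀ᶠ N : ℕ in atTop, (Real.logb 2 N) ^ r ≤ κ * (N : ℝ) ^ s := by
  have h := (isLittleO_log_rpow_rpow_atTop r hs).comp_tendsto
    (tendsto_natCast_atTop_atTop (R := ℝ))
  have hc : 0 < κ * (Real.log 2) ^ r := by
    have := Real.log_pos (by norm_num : (1 : ℝ) < 2)
    positivity
  filter_upwards [h.bound hc, eventually_ge_atTop 1] with N hN hN1
  have hN1' : (1 : ℝ) ≤ N := by exact_mod_cast hN1
  have hl2 := Real.log_pos (by norm_num : (1 : ℝ) < 2)
  have hlN := Real.log_nonneg hN1'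
  simp only [Function.comp, Real.norm_eq_abs] at hN
  rw [abs_of_nonneg (by positivity), abs_of_nonneg (by positivity)] at hN
  rw [Real.logb, Real.div_rpow hlN hl2.le, div_le_iff₀ (by positivity)]
  linarith

/-- Properties of the scaling constants. -/
lemma scaling (T : ℝ → ℝ) (hT : Antitone T) (hT0 : ∀ x, 0 ≤ T x) (β₁ β₂ : ℝ) (hβ₁ : 0 < β₁)
    (hβ₂ : 0 < β₂) (C t₀ : ℝ) (hC : 1 ≤ C) (ht₀ : 1 ≤ t₀) (hTpos : ∀ a, t₀ ≤ a → 0 < T a)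
    (hpot : ∀ a, t₀ ≤ a → ∀ l : ℝ, 1 ≤ l →
      T (l * a) ≤ C * l ^ (-β₁) * T a ∧ T a ≤ C * l ^ β₂ * T (l * a))
    (c : ℕ → ℝ)
    (hc : ∀ N : ℕ, c N = sInf {x : ℝ | 0 ≤ x ∧ T x ≤ (2 * N * Real.logb 2 N)⁻¹}) :
    ∀ᶠ N : ℕ in atTop, (N : ℝ) ^ (1 / (2 * β₂)) ≤ c N ∧
      T (c N) ≤ C * 2 ^ β₂ * (2 * N * Real.logb 2 N)⁻¹ := by
  set b := 1 / (2 * β₂) with hb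
  have hb0 : 0 < b := by positivity
  have hTt := hTpos t₀ le_rfl
  set κ := 2 * (T t₀ * t₀ ^ β₂ / C) with hκ
  have hκ0 : 0 < κ := by positivity
  filter_upwards [eventually_ge_atTop 2, (tendsto_natrpow b hb0).eventually_ge_atTop t₀,
    (tendsto_natrpow (1 / 2) (by norm_num)).eventually_gt_atTop (κ⁻¹)] with N hN2 hNt hNκ
  have hN2' : (2 : ℝ) ≤ N := by exact_mod_cast hN2
  have hN0 : (0 : ℝ) < N := by linarith
  have hL1 : 1 ≤ Real.logb 2 N := by
    rw [Real.le_logb_iff_rpow_le (by norm_num) hN0]; simpa using hN2'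
  have hA0 : 0 < (2 * N * Real.logb 2 N)⁻¹ := by positivity
  have hA1 : (2 * N * Real.logb 2 N)⁻¹ ≤ (2 * (N : ℝ))⁻¹ :=
    inv_anti₀ (by positivity) (by nlinarith)
  have hlow : (2 * N * Real.logb 2 N)⁻¹ < T ((N : ℝ) ^ b) := by
    have h1 := (hpot t₀ le_rfl ((N : ℝ) ^ b / t₀) (by rwa [one_le_div (by linarith)])).2
    have e : (N : ℝ) ^ b / t₀ * t₀ = (N : ℝ) ^ b := by field_simp
    have e2 : ((N : ℝ) ^ b) ^ β₂ = (N : ℝ) ^ (1 / 2 : ℝ) := by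
      rw [← Real.rpow_mul hN0.le]
      congr 1
      rw [hb]; field_simp
    rw [e, Real.div_rpow (by positivity) (by linarith), e2] at h1
    have e3 : (N : ℝ) = (N : ℝ) ^ (1 / 2 : ℝ) * (N : ℝ) ^ (1 / 2 : ℝ) := by
      rw [← Real.rpow_add hN0]; norm_num
    set w := (N : ℝ) ^ (1 / 2 : ℝ) with hw
    have hw0 : 0 < w := by positivity
    have ht0p : 0 < t₀ ^ β₂ := by positivity
    have h2 : κ / (2 * w) ≤ T ((N : ℝ) ^ b) := by
      rw [hκ, div_le_iff₀ (by positivity)]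
      have : C * (w / t₀ ^ β₂) * T ((N : ℝ) ^ b) * (t₀ ^ β₂ / C) = T ((N : ℝ) ^ b) * w := by
        field_simp
      have h3 := mul_le_mul_of_nonneg_right h1 (by positivity : 0 ≤ t₀ ^ β₂ / C)
      rw [this] at h3
      have h4 : T t₀ * t₀ ^ β₂ / C = T t₀ * (t₀ ^ β₂ / C) := by ring
      rw [h4]
      linarith
    refine lt_of_le_of_lt hA1 (lt_of_lt_of_le ?_ h2)
    rw [e3, inv_eq_one_div, div_lt_div_iff₀ (by positivity) (by positivity)]
    have h5 : 1 < κ * w := by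
      have := mul_lt_mul_of_pos_left hNκ hκ0
      rwa [mul_inv_cancel₀ hκ0.ne'] at this
    nlinarith
  have hne : {x : ℝ | 0 ≤ x ∧ T x ≤ (2 * N * Real.logb 2 N)⁻¹}.Nonempty := by
    have h0 : Tendsto (fun l : ℝ => C * l ^ (-β₁) * T t₀) atTop (nhds (C * 0 * T t₀)) :=
      ((tendsto_rpow_neg_atTop hβ₁).const_mul C).mul_const _
    rw [mul_zero, zero_mul] at h0
    obtain ⟨l, hl1, hl2⟩ := ((h0.eventually (gt_mem_nhds hA0)).and (eventually_ge_atTop 1)).exists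
    refine ⟨l * t₀, by positivity, ?_⟩
    exact ((hpot t₀ le_rfl l hl2).1).trans hl1.le
  have hcb : (N : ℝ) ^ b ≤ c N := by
    rw [hc]
    refine le_csInf hne ?_
    rintro x ⟨_, hx⟩
    by_contra hlt
    push Not at hlt
    have := hT hlt.le
    linarith
  refine ⟨hcb, ?_⟩
  have hc0 : t₀ ≤ c N := hNt.trans hcb
  have h2c : T (2 * c N) ≤ (2 * N * Real.logb 2 N)⁻¹ := by
    obtain ⟨x, hx, hx2⟩ := exists_lt_of_csInf_lt hne (b := 2 * c N) (by rw [← hc]; linarith)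
    exact (hT hx2.le).trans hx.2
  calc T (c N) ≤ C * 2 ^ β₂ * T (2 * c N) := (hpot (c N) hc0 2 (by norm_num)).2
    _ ≤ _ := by gcongr

/-- The deterministic estimate on tails. -/
lemma analytic (T : ℝ → ℝ) (hT : Antitone T) (hT0 : ∀ x, 0 ≤ T x) (α : ℝ) (hα : 0 < α)
    (hRV : Tendsto (fun x => T x / T (2 * x)) atTop (nhds ((2 : ℝ) ^ α)))
    (c : ℕ → ℝ)
    (hc : ∀ N : ℕ, c N = sInf {x : ℝ | 0 ≤ x ∧ T x ≤ (2 * N * Real.logb 2 N)⁻¹})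
    (δ : ℕ → ℝ) (hδpos : ∀ N, 0 < δ N) (hδ0 : Tendsto δ atTop (nhds 0))
    (hδslow : ∀ e : ℝ, 0 < e → Tendsto (fun N : ℕ => δ N * (N : ℝ) ^ e) atTop atTop)
    (mN : ℕ → ℕ) (hmN1 : ∀ N, 1 ≤ mN N)
    (hmN : ∀ N : ℕ, (mN N : ℝ) = Real.logb 2 N + Real.logb 2 (δ N))
    (q ε : ℝ) (hε0 : 0 < ε) (hεα : ε < 4 * α) (hq : q ≤ 2 * α - ε / 2) :
    ∀ᶠ N : ℕ in atTop, 1 ≤ N ∧ 0 < c N ∧ 0 < δ N / Real.logb 2 N ∧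
      ∀ x, (δ N / Real.logb 2 N) ^ (1 / (2 * α + ε)) ≤ x →
        2 * ((N * 2 ^ mN N) * (mN N * T (x / 2 * c N) + mN N * (mN N *
          (T (x / (2 * mN N) * c N) * T (x / (2 * mN N) * c N))))) * T (x * c N) ≤
        (x / (δ N / Real.logb 2 N) ^ (1 / (2 * α + ε))) ^ (-q) := by
  set η := ε / 4 with hη
  obtain ⟨C, t₀, hC, ht₀, hTpos, hpot⟩ := potter T hT hT0 α η (by positivity) (by
    rw [hη]; linarith) hRV
  set β₁ := α - η with hβ₁
  set β₂ := α + η with hβ₂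
  have hβ₁0 : 0 < β₁ := by rw [hβ₁, hη]; linarith
  have hβ₂0 : 0 < β₂ := by rw [hβ₂, hη]; linarith
  have hscal := scaling T hT hT0 β₁ β₂ hβ₁0 hβ₂0 C t₀ hC ht₀ hTpos hpot c hc
  set b := 1 / (2 * β₂) with hb
  have hb0 : 0 < b := by positivity
  set γ := 2 * α + ε with hγ
  have hγ0 : 0 < γ := by positivity
  set K := C * C * (C * 2 ^ β₂) with hK
  set K2 := C * 2 ^ β₂ + 1 with hK2
  have hC0 : 0 < C := by linarith
  have hK0 : 0 < K := by positivity
  have hK20 : 0 < K2 := by positivity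
  have hTt := hTpos t₀ le_rfl
  -- constant for the two-jump term
  set s := 3 * b / 4 * β₁ with hs
  have hs0 : 0 < s := by positivity
  set κ := (C ^ 2 * (2 ^ β₂) ^ 2 * (C * t₀ ^ β₁ * T t₀))⁻¹ with hκ
  have ht0p : 0 < t₀ := by linarith
  have hκ0 : 0 < κ := by positivity
  -- small
  set τ := (K2 * K ^ 2 / 2)⁻¹ with hτ
  have hτ0 : 0 < τ := by positivity
  have hδsmall : ∀ᶠ N : ℕ in atTop, (δ N) ^ (ε / 2 / γ) ≤ τ := by
    have h0 : Tendsto (fun N => (δ N) ^ (ε / 2 / γ)) atTop (nhds 0) := by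
      have := hδ0.rpow_const (p := ε / 2 / γ) (Or.inr (by positivity))
      rwa [Real.zero_rpow (by positivity)] at this
    exact (h0.eventually (gt_mem_nhds hτ0)).mono fun N h => h.le
  filter_upwards [hscal, eventually_ge_atTop 2, hδ0.eventually (gt_mem_nhds one_pos),
    hδsmall, (hδslow (b * γ / 8) (by positivity)).eventually_ge_atTop 1,
    logb_rpow_small 1 (b * γ / 8) 1 (by positivity) one_pos,
    logb_rpow_small 1 (b / 4) 1 (by positivity) one_pos,
    (tendsto_natrpow (b / 2) (by positivity)).eventually_ge_atTop (2 * t₀),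
    logb_rpow_small (1 + 2 * β₂) s κ hs0 hκ0] with
    N hsc hN2 hδ1 hδs hδe hLe hLb hNb hLs
  obtain ⟨hcb, hTc⟩ := hsc
  have hN2' : (2 : ℝ) ≤ N := by exact_mod_cast hN2
  have hN0 : (0 : ℝ) < N := by linarith
  have hL1 : 1 ≤ Real.logb 2 N := by
    rw [Real.le_logb_iff_rpow_le (by norm_num) hN0]; simpa using hN2'
  have hd := hδpos N
  have hm1 : (1 : ℝ) ≤ mN N := by exact_mod_cast hmN1 N
  have hmL : (mN N : ℝ) ≤ Real.logb 2 N := by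
    rw [hmN]
    have : Real.logb 2 (δ N) ≤ 0 := Real.logb_nonpos (by norm_num) hd.le hδ1.le
    linarith
  have h2m : (2 : ℝ) ^ mN N = N * δ N := by
    rw [← Real.rpow_natCast, hmN, Real.rpow_add (by norm_num), Real.rpow_logb (by norm_num)
      (by norm_num) hN0, Real.rpow_logb (by norm_num) (by norm_num) hd]
  have hcN0 : 0 < c N := lt_of_lt_of_le (by positivity) hcb
  set L := Real.logb 2 N with hL
  have hL0 : 0 < L := by linarith
  set d := δ N with hddef
  set m : ℝ := (mN N : ℝ) with hm
  have hm0 : 0 < m := by linarith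
  have hdL : 0 < d / L := by positivity
  refine ⟨by omega, hcN0, hdL, ?_⟩
  set x₀ := (d / L) ^ (1 / γ) with hx₀
  have hx₀0 : 0 < x₀ := by positivity
  have hx₀1 : x₀ ≤ 1 := by
    refine Real.rpow_le_one hdL.le ?_ (by positivity)
    rw [div_le_one hL0]; linarith
  have hx₀γ : x₀ ^ γ = d / L := by
    rw [hx₀, ← Real.rpow_mul hdL.le, one_div, inv_mul_cancel₀ hγ0.ne', Real.rpow_one]
  -- lower bound on x₀
  have hx₀b : (N : ℝ) ^ (-(b / 4)) ≤ x₀ := by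
    have h1 : (N : ℝ) ^ (-(b * γ / 4)) ≤ d / L := by
      rw [Real.rpow_one, one_mul] at hLe
      rw [le_div_iff₀ hL0]
      have e : (N : ℝ) ^ (-(b * γ / 4)) = (N : ℝ) ^ (-(b * γ / 8)) * (N : ℝ) ^ (-(b * γ / 8)) := by
        rw [← Real.rpow_add hN0]; congr 1; ring
      have e2 : (N : ℝ) ^ (-(b * γ / 8)) = ((N : ℝ) ^ (b * γ / 8))⁻¹ := Real.rpow_neg hN0.le _
      rw [e, e2]
      have hw : 0 < (N : ℝ) ^ (b * γ / 8) := by positivity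
      set w := (N : ℝ) ^ (b * γ / 8) with hwdef
      calc w⁻¹ * w⁻¹ * L ≤ w⁻¹ * w⁻¹ * w := by gcongr
        _ = 1 * w⁻¹ := by field_simp
        _ ≤ d * w * w⁻¹ := by gcongr
        _ = d := by field_simp
    have h2 := Real.rpow_le_rpow (by positivity) h1 (by positivity : 0 ≤ 1 / γ)
    rw [← Real.rpow_mul hN0.le] at h2
    have e : -(b * γ / 4) * (1 / γ) = -(b / 4) := by field_simp
    rwa [e] at h2
  have hxc : (N : ℝ) ^ (3 * b / 4) ≤ x₀ * c N := by
    calc (N : ℝ) ^ (3 * b / 4) = (N : ℝ) ^ (-(b / 4)) * (N : ℝ) ^ b := by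
          rw [← Real.rpow_add hN0]; congr 1; ring
      _ ≤ _ := by gcongr
  have hmb : m ≤ (N : ℝ) ^ (b / 4) := by
    rw [Real.rpow_one, one_mul] at hLb
    linarith
  have hxcm : t₀ ≤ x₀ * c N / (2 * m) := by
    rw [le_div_iff₀ (by positivity)]
    calc t₀ * (2 * m) = (2 * t₀) * m := by ring
      _ ≤ (N : ℝ) ^ (b / 2) * (N : ℝ) ^ (b / 4) := by gcongr
      _ = (N : ℝ) ^ (3 * b / 4) := by rw [← Real.rpow_add hN0]; congr 1; ring
      _ ≤ _ := hxc
  have hxct : t₀ ≤ x₀ * c N := by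
    refine hxcm.trans (div_le_self (by positivity) (by linarith))
  intro x hx
  have hx0 : 0 < x := hx₀0.trans_le hx
  set u := x / x₀ with hu
  have hu1 : 1 ≤ u := by rwa [hu, one_le_div hx₀0]
  have hu0 : 0 < u := by linarith
  have hxu : x = u * x₀ := by rw [hu]; field_simp
  have hxxc : x₀ * c N ≤ x * c N := by gcongr
  set A := (2 * N * L)⁻¹ with hA
  have hA0 : 0 < A := by positivity
  set t := T (x * c N) with ht
  have ht0 : 0 ≤ t := hT0 _
  -- main bound on t
  have hTx₀ : T (x₀ * c N) ≤ C * x₀ ^ (-β₂) * T (c N) := by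
    have h := (hpot (x₀ * c N) hxct (x₀⁻¹) ((one_le_inv₀ hx₀0).2 hx₀1)).2
    rw [← mul_assoc, inv_mul_cancel₀ hx₀0.ne', one_mul, Real.inv_rpow hx₀0.le,
      ← Real.rpow_neg hx₀0.le] at h
    exact h
  have htb : t ≤ K * u ^ (-β₁) * x₀ ^ (-β₂) * A := by
    have h := (hpot (x₀ * c N) hxct u hu1).1
    rw [← mul_assoc, ← hxu] at h
    calc t ≤ C * u ^ (-β₁) * T (x₀ * c N) := h
      _ ≤ C * u ^ (-β₁) * (C * x₀ ^ (-β₂) * (C * 2 ^ β₂ * A)) := by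
          gcongr
          refine hTx₀.trans ?_
          gcongr
      _ = _ := by rw [hK]; ring
  -- halves
  have hhalf : T (x / 2 * c N) ≤ C * 2 ^ β₂ * t := by
    have hge : t₀ ≤ x / 2 * c N := by
      refine hxcm.trans ?_
      rw [div_le_iff₀ (by positivity)]
      calc x₀ * c N ≤ x * c N := hxxc
        _ = x / 2 * c N * (2 * 1) := by ring
        _ ≤ _ := by gcongr
    have h := (hpot _ hge 2 (by norm_num)).2
    have e : 2 * (x / 2 * c N) = x * c N := by ring
    rwa [e] at h
  have hsmall : T (x / (2 * m) * c N) ≤ C * (2 * m) ^ β₂ * t := by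
    have hge : t₀ ≤ x / (2 * m) * c N := by
      refine hxcm.trans ?_
      rw [div_mul_eq_mul_div]
      gcongr
    have h := (hpot _ hge (2 * m) (by linarith)).2
    have e : 2 * m * (x / (2 * m) * c N) = x * c N := by field_simp
    rwa [e] at h
  -- two jump term
  have htwo : m * (C * (2 * m) ^ β₂) ^ 2 * t ≤ 1 := by
    have h1 : t ≤ C * t₀ ^ β₁ * T t₀ * (N : ℝ) ^ (-s) := by
      have hNt : t₀ ≤ (N : ℝ) ^ (3 * b / 4) := by
        have : (N : ℝ) ^ (b / 2) ≤ (N : ℝ) ^ (3 * b / 4) :=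
          Real.rpow_le_rpow_of_exponent_le (by linarith) (by linarith)
        linarith
      have h := (hpot t₀ le_rfl ((N : ℝ) ^ (3 * b / 4) / t₀) (by rwa [one_le_div ht0p])).1
      rw [div_mul_cancel₀ _ ht0p.ne', Real.div_rpow (by positivity) ht0p.le,
        ← Real.rpow_mul hN0.le, Real.rpow_neg ht0p.le] at h
      have e : 3 * b / 4 * -β₁ = -s := by rw [hs]; ring
      rw [e] at h
      calc t ≤ T ((N : ℝ) ^ (3 * b / 4)) := hT (hxc.trans hxxc)
        _ ≤ _ := h
        _ = _ := by rw [div_inv_eq_mul]; ring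
    have h2 : m * ((2 * m) ^ β₂) ^ 2 ≤ (2 ^ β₂) ^ 2 * L ^ (1 + 2 * β₂) := by
      have e : (2 ^ β₂) ^ 2 * L ^ (1 + 2 * β₂) = L * ((2 * L) ^ β₂) ^ 2 := by
        rw [Real.mul_rpow (by norm_num) hL0.le, Real.rpow_add hL0, Real.rpow_one,
          mul_comm (2 : ℝ) β₂, Real.rpow_mul hL0.le]
        norm_cast
        ring
      rw [e]
      gcongr
    have hNs : 0 < (N : ℝ) ^ s := by positivity
    calc m * (C * (2 * m) ^ β₂) ^ 2 * t = C ^ 2 * (m * ((2 * m) ^ β₂) ^ 2) * t := by ring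
      _ ≤ C ^ 2 * ((2 ^ β₂) ^ 2 * (κ * (N : ℝ) ^ s)) * (C * t₀ ^ β₁ * T t₀ * (N : ℝ) ^ (-s)) := by
          have h4 : m * ((2 * m) ^ β₂) ^ 2 ≤ (2 ^ β₂) ^ 2 * (κ * (N : ℝ) ^ s) :=
            h2.trans (mul_le_mul_of_nonneg_left hLs (by positivity))
          exact mul_le_mul (mul_le_mul_of_nonneg_left h4 (by positivity)) h1 ht0 (by positivity)
      _ = κ * (C ^ 2 * (2 ^ β₂) ^ 2 * (C * t₀ ^ β₁ * T t₀)) * ((N : ℝ) ^ s * (N : ℝ) ^ (-s)) := by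
          ring
      _ = 1 := by
          rw [Real.rpow_neg hN0.le, mul_inv_cancel₀ hNs.ne', hκ, inv_mul_cancel₀ (by positivity),
            one_mul]
  have hbr : m * T (x / 2 * c N) + m * (m * (T (x / (2 * m) * c N) * T (x / (2 * m) * c N))) ≤
      L * t * K2 := by
    calc _ ≤ m * (C * 2 ^ β₂ * t) + m * (m * ((C * (2 * m) ^ β₂ * t) * (C * (2 * m) ^ β₂ * t))) := by
          have := hT0 (x / (2 * m) * c N)
          gcongr
      _ = m * t * (C * 2 ^ β₂ + m * (C * (2 * m) ^ β₂) ^ 2 * t) := by ring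
      _ ≤ L * t * K2 := by
          rw [hK2]
          gcongr
  rw [h2m]
  calc _ ≤ 2 * (N * (N * d) * (L * t * K2)) * t := by gcongr
    _ = 2 * N ^ 2 * d * L * K2 * t ^ 2 := by ring
    _ ≤ 2 * N ^ 2 * d * L * K2 * (K * u ^ (-β₁) * x₀ ^ (-β₂) * A) ^ 2 := by gcongr
    _ = (K2 * K ^ 2 / 2) * ((d / L) * (x₀ ^ (-β₂)) ^ 2) * (u ^ (-β₁)) ^ 2 := by
        rw [hA]; field_simp
    _ ≤ 1 * (u ^ (-β₁)) ^ 2 := by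
        gcongr
        have e : (d / L) * (x₀ ^ (-β₂)) ^ 2 = (d / L) ^ (ε / 2 / γ) := by
          rw [← hx₀γ, ← Real.rpow_natCast, ← Real.rpow_mul hx₀0.le, ← Real.rpow_mul hx₀0.le,
            ← Real.rpow_add hx₀0]
          congr 1
          rw [hβ₂, hη, hγ]
          push_cast
          field_simp
          ring
        rw [e]
        have h3 : (d / L) ^ (ε / 2 / γ) ≤ τ := by
          refine le_trans ?_ hδs
          exact Real.rpow_le_rpow hdL.le (div_le_self hd.le hL1) (by positivity)
        calc _ ≤ (K2 * K ^ 2 / 2) * τ := by gcongr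
          _ = 1 := by rw [hτ, mul_inv_cancel₀ (by positivity)]
    _ = u ^ (-(2 * β₁)) := by
        rw [one_mul, ← Real.rpow_natCast, ← Real.rpow_mul hu0.le]
        congr 1
        push_cast
        ring
    _ ≤ u ^ (-q) := by
        refine Real.rpow_le_rpow_of_exponent_le hu1 ?_
        rw [hβ₁, hη]
        linarith

/-- let `p ∈ (0,1]` with `p < 2α`. For every `0 < ε ≤ (2α−p)/2` there is `N₀`
such that for all `N ≥ N₀` and all `n ≥ 0`,
`E[θ_n^p] ≤ (1 + 4p/(2α−p)) n (δ_N/log₂ N)^{p/(2α+ε)}`, and the same bound holds for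
`E[((𝒴_N(n) − R^{N,m_N}(n))₊)^p]`. -/
theorem stmt_3 {Ω : Type*} [MeasurableSpace Ω] (P : Measure Ω) [IsProbabilityMeasure P]
    (X : Ω → ℝ) (hXmeas : Measurable X) (hXpos : ∀ ω, 0 ≤ X ω)
    (α : ℝ) (hα : 0 < α)
    (hRV : ∀ l : ℝ, 0 < l →
      Tendsto (fun x => tail P X x / tail P X (l * x)) atTop (nhds (l ^ α)))
    (ξ : (N : ℕ) → ℕ → Fin N → Fin 2 → Ω → ℝ)
    (hξmeas : ∀ N n i j, Measurable (ξ N n i j))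
    (hξpos : ∀ N n i j ω, 0 ≤ ξ N n i j ω)
    (hξdist : ∀ N n i j, Measure.map (ξ N n i j) P = Measure.map X P)
    (hξindep : ∀ N, iIndepFun
      (fun p : ℕ × Fin N × Fin 2 => ξ N p.1 p.2.1 p.2.2) P)
    (δ : ℕ → ℝ) (hδpos : ∀ N, 0 < δ N) (hδ0 : Tendsto δ atTop (nhds 0))
    (hδslow : ∀ e : ℝ, 0 < e → Tendsto (fun N : ℕ => δ N * (N : ℝ) ^ e) atTop atTop)
    (mN : ℕ → ℕ) (hmN1 : ∀ N, 1 ≤ mN N)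
    (hmN : ∀ N : ℕ, (mN N : ℝ) = Real.logb 2 N + Real.logb 2 (δ N))
    (p : ℝ) (hp0 : 0 < p) (hp1 : p ≤ 1) (hp : p < 2 * α)
    (ε : ℝ) (hε0 : 0 < ε) (hε : ε ≤ (2 * α - p) / 2) :
    ∃ N₀ : ℕ, ∀ N : ℕ, N₀ ≤ N → ∀ n : ℕ,
      (∫ ω, (theta N (mN N) (fun k i j => ξ N k i j ω / cN P X N) n) ^ p ∂P) ≤
        (1 + 4 * p / (2 * α - p)) * n * (δ N / Real.logb 2 N) ^ (p / (2 * α + ε)) ∧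
      (∫ ω, (max (brwMax N (fun k i j => ξ N k i j ω / cN P X N) n -
            dsp N (mN N) (fun k i j => ξ N k i j ω / cN P X N) n) 0) ^ p ∂P) ≤
        (1 + 4 * p / (2 * α - p)) * n * (δ N / Real.logb 2 N) ^ (p / (2 * α + ε)) := by
  set q := p + (2 * α - p) / 4 with hq
  have hTanti : Antitone (tail P X) := by
    intro a b hab
    refine ENNReal.toReal_mono (measure_ne_top _ _) (measure_mono fun ω (hω : b < X ω) => ?_)
    exact lt_of_le_of_lt hab hω
  have hT0 : ∀ x, 0 ≤ tail P X x := fun x => ENNReal.toReal_nonneg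
  have hana := analytic (tail P X) hTanti hT0 α hα (hRV 2 (by norm_num)) (cN P X)
    (fun N => rfl) δ hδpos hδ0 hδslow mN hmN1 hmN q ε hε0 (by linarith) (by rw [hq]; linarith)
  obtain ⟨N₀, hN₀⟩ := Filter.eventually_atTop.1 hana
  refine ⟨N₀, fun N hN n => ?_⟩
  obtain ⟨hN1, hc0, hdL, hbound⟩ := hN₀ N hN
  set c := cN P X N with hc
  set x₀ := (δ N / Real.logb 2 N) ^ (1 / (2 * α + ε)) with hx₀
  have hx₀0 : 0 < x₀ := by positivity
  have hx₀p : x₀ ^ p = (δ N / Real.logb 2 N) ^ (p / (2 * α + ε)) := by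
    rw [hx₀, ← Real.rpow_mul hdL.le]
    congr 1
    ring
  have hYm : ∀ k i j, Measurable (fun ω => ξ N k i j ω / c) :=
    fun k i j => (hξmeas N k i j).div_const c
  have hY0 : ∀ k i j ω, 0 ≤ ξ N k i j ω / c := fun k i j ω => div_nonneg (hξpos N k i j ω) hc0.le
  have hYi : iIndepFun (fun q : ℕ × Fin N × Fin 2 => fun ω => ξ N q.1 q.2.1 q.2.2 ω / c) P :=
    (hξindep N).comp (fun _ y => y / c) (fun _ => measurable_id.div_const c)
  set ν : Measure ℝ := Measure.map (fun y => y / c) (Measure.map X P) with hν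
  have hYν : ∀ k i j, Measure.map (fun ω => ξ N k i j ω / c) P = ν := by
    intro k i j
    have hdm : Measurable (fun y : ℝ => y / c) := measurable_id.div_const c
    rw [hν, ← hξdist N k i j, Measure.map_map hdm (hξmeas N k i j)]
    rfl
  have hνI : ∀ y, ν (Ioi y) = ENNReal.ofReal (tail P X (y * c)) := by
    intro y
    have hdm : Measurable (fun y : ℝ => y / c) := measurable_id.div_const c
    rw [hν, Measure.map_apply hdm measurableSet_Ioi,
      Measure.map_apply hXmeas (hdm measurableSet_Ioi), tail,
      ENNReal.ofReal_toReal (measure_ne_top _ _)]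
    congr 1
    ext ω
    exact lt_div_iff₀ hc0
  have hmom : ∀ n, ∫⁻ ω, ENNReal.ofReal
      ((theta N (mN N) (fun k i j => ξ N k i j ω / c) (n + 1) -
      theta N (mN N) (fun k i j => ξ N k i j ω / c) n) ^ p) ∂P ≤
      ENNReal.ofReal ((1 + p / (q - p)) * x₀ ^ p) := by
    intro n
    refine moment_of_tail P _ ?_ (fun ω => sub_nonneg.2 (theta_mono _ _ _ _)) p q x₀ hp0
      (by rw [hq]; linarith) hx₀0 ?_
    · exact (measurable_theta N (mN N) _ (n + 1) hYm).sub (measurable_theta N (mN N) _ n hYm)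
    · intro x hx
      refine (incr_tail P N hN1 (fun k i j ω => ξ N k i j ω / c) hYm hY0 hYi ν hYν n (mN N)
        (hmN1 N) x (hx₀0.trans_le hx)).trans ?_
      rw [hνI, hνI, hνI]
      refine le_trans (le_of_eq ?_) (ENNReal.ofReal_le_ofReal (hbound x hx))
      have h1 := hT0 (x / 2 * c)
      have h2 := hT0 (x / (2 * mN N) * c)
      have h3 := hT0 (x * c)
      rw [ENNReal.ofReal_mul (by positivity), ENNReal.ofReal_mul (by positivity),
        ENNReal.ofReal_mul (by positivity), ENNReal.ofReal_mul (by positivity),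
        ENNReal.ofReal_add (by positivity) (by positivity),
        ENNReal.ofReal_mul (by positivity), ENNReal.ofReal_mul (by positivity),
        ENNReal.ofReal_mul (by positivity), ENNReal.ofReal_mul (by positivity),
        ENNReal.ofReal_pow (by norm_num), ENNReal.ofReal_natCast, ENNReal.ofReal_natCast]
      norm_num
  have hKK : (1 + p / (q - p)) * x₀ ^ p =
      (1 + 4 * p / (2 * α - p)) * (δ N / Real.logb 2 N) ^ (p / (2 * α + ε)) := by
    rw [hx₀p]
    have h4 : q - p = (2 * α - p) / 4 := by rw [hq]; ring
    rw [h4, div_div_eq_mul_div, mul_comm p 4]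
  rw [hKK] at hmom
  have h2αp : 0 < 2 * α - p := by linarith
  have hth := theta_moment P N (mN N) (fun k i j ω => ξ N k i j ω / c) hYm p hp0 hp1 _
    (by positivity) hmom n
  have hfin := final_bound P N (mN N) (fun k i j ω => ξ N k i j ω / c) hYm p hp0 n _
    (by positivity) hth
  have e : (n : ℝ) * ((1 + 4 * p / (2 * α - p)) *
      (δ N / Real.logb 2 N) ^ (p / (2 * α + ε))) =
      (1 + 4 * p / (2 * α - p)) * n * (δ N / Real.logb 2 N) ^ (p / (2 * α + ε)) := by ring
  rw [e] at hfin
  exact hfin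

end
end

section
/- For every integer n₀ ≥ 0 and every ε > 0, the conditional probability P( 𝒴_1(n₀ + ⌊(1−ε) log₂ N⌋) < 𝒴_N(n₀) + ε | F_{n₀} ) converges to 1 in probability as N → ∞; in particular, P( 𝒴_1(n₀ + ⌊(1−ε) log₂ N⌋) < 𝒴_N(n₀) + ε ) → 1 as N → ∞. -/
open MeasureTheory ProbabilityTheory Real Filter Set

noncomputable section

/-- The σ-algebra `F_n` generated by the jump variables `ξ k i j`, `0 ≤ k ≤ n-1`
(the trivial σ-algebra for `n = 0`). -/
def brwFilt {Ω : Type*} [MeasurableSpace Ω] (N : ℕ) (ξ : ℕ → Fin N → Fin 2 → Ω → ℝ) (n : ℕ) :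
    MeasurableSpace Ω :=
  ⨆ (k : ℕ) (_ : k < n) (i : Fin N) (j : Fin 2), MeasurableSpace.comap (ξ k i j) inferInstance

lemma sorted_getD_gt_iff (t : ℝ) : ∀ (l : List ℝ), l.Pairwise (· ≤ ·) → ∀ k, k < l.length →
    (t < l.getD k 0 ↔ l.length ≤ l.countP (fun x => decide (t < x)) + k)
  | [], _, k, hk => by simp at hk
  | a :: l, hs, k, hk => by
    rw [List.pairwise_cons] at hs
    have ih := sorted_getD_gt_iff t l hs.2
    by_cases hta : t < a
    · have hall : ∀ x ∈ a :: l, t < x := by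
        intro x hx
        rcases List.mem_cons.1 hx with rfl | hx
        · exact hta
        · exact hta.trans_le (hs.1 x hx)
      have hc : (a :: l).countP (fun x => decide (t < x)) = (a :: l).length := by
        rw [List.countP_eq_length]
        intro x hx
        simpa using hall x hx
      rw [hc, List.getD_eq_getElem _ _ hk]
      exact ⟨fun _ => Nat.le_add_right _ _, fun _ => hall _ (List.getElem_mem hk)⟩
    · rw [List.countP_cons_of_neg (by simpa using hta)]
      cases k with
      | zero =>
        have := List.countP_le_length (p := fun x => decide (t < x)) (l := l)
        simp only [List.getD_cons_zero, List.length_cons, add_zero]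
        exact ⟨fun h => absurd h hta, fun h => by omega⟩
      | succ k =>
        have hk' : k < l.length := by simpa using hk
        rw [List.getD_cons_succ, ih k hk', List.length_cons]
        omega

lemma brwStep_gt_iff_s4 (N : ℕ) (pos : Fin N → ℝ) (jump : Fin N → Fin 2 → ℝ) (t : ℝ) (i : Fin N) :
    t < brwStep N pos jump i ↔
      N ≤ (Finset.univ.filter fun p : Fin N × Fin 2 => t < pos p.1 + jump p.1 p.2).card + i := by
  unfold brwStep
  set s := ((Finset.univ : Finset (Fin N × Fin 2)).val.map fun p => pos p.1 + jump p.1 p.2) with hs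
  have hlen : (s.sort (· ≤ ·)).length = N * 2 := by
    rw [Multiset.length_sort, hs]; simp
  rw [sorted_getD_gt_iff t _ (Multiset.pairwise_sort _ _) _ (by rw [hlen]; omega), hlen]
  have hc : (s.sort (· ≤ ·)).countP (fun x => decide (t < x))
      = (Finset.univ.filter fun p : Fin N × Fin 2 => t < pos p.1 + jump p.1 p.2).card := by
    rw [← Multiset.coe_countP, Multiset.sort_eq, hs, Multiset.countP_map]
    rfl
  rw [hc]
  omega

lemma brwStep_count (N : ℕ) (pos : Fin N → ℝ) (jump : Fin N → Fin 2 → ℝ) (t : ℝ) :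
    (Finset.univ.filter fun i : Fin N => t < brwStep N pos jump i).card ≤
      (Finset.univ.filter fun p : Fin N × Fin 2 => t < pos p.1 + jump p.1 p.2).card := by
  simp only [brwStep_gt_iff_s4]
  generalize (Finset.univ.filter fun p : Fin N × Fin 2 => t < pos p.1 + jump p.1 p.2).card = C
  calc _ ≤ (Finset.Ico (N - C) N).card := by
        refine Finset.card_le_card_of_injOn (fun i => (i : ℕ)) ?_ ?_
        · intro i hi
          simp at hi ⊢
          omega
        · intro i _ j _ h
          exact Fin.ext h
    _ ≤ C := by rw [Nat.card_Ico]; omega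

lemma brwStep_count_succ (N : ℕ) (pos : Fin N → ℝ) (jump : Fin N → Fin 2 → ℝ) (t η : ℝ) :
    (Finset.univ.filter fun i : Fin N => t + η < brwStep N pos jump i).card ≤
      2 * (Finset.univ.filter fun i : Fin N => t < pos i).card +
      (Finset.univ.filter fun p : Fin N × Fin 2 => η < jump p.1 p.2).card := by
  refine (brwStep_count N pos jump (t + η)).trans ?_
  have h1 : (Finset.univ.filter fun p : Fin N × Fin 2 => t + η < pos p.1 + jump p.1 p.2) ⊆
      ((Finset.univ.filter fun i : Fin N => t < pos i) ×ˢ (Finset.univ : Finset (Fin 2))) ∪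
      (Finset.univ.filter fun p : Fin N × Fin 2 => η < jump p.1 p.2) := by
    intro p hp
    simp at hp ⊢
    by_contra h
    push Not at h
    linarith [h.1, h.2]
  refine (Finset.card_le_card h1).trans ((Finset.card_union_le _ _).trans ?_)
  rw [Finset.card_product]
  simp [mul_comm]

/-- Deterministic bound. -/
lemma brw_count (N : ℕ) (jump : ℕ → Fin N → Fin 2 → ℝ) (n₀ : ℕ) (M η : ℝ)
    (hM : ∀ i, brw N (fun _ => 0) jump n₀ i ≤ M) (n : ℕ) :
    (Finset.univ.filter fun i : Fin N => M + n * η < brw N (fun _ => 0) jump (n₀ + n) i).card ≤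
      2 ^ n * ∑ k ∈ Finset.range n,
        (Finset.univ.filter fun p : Fin N × Fin 2 => η < jump (n₀ + k) p.1 p.2).card := by
  induction n with
  | zero =>
    simp
    exact hM
  | succ n ih =>
    have h := brwStep_count_succ N (brw N (fun _ => 0) jump (n₀ + n)) (jump (n₀ + n)) (M + n * η) η
    have e : M + ((n + 1 : ℕ) : ℝ) * η = M + n * η + η := by push_cast; ring
    rw [e, Finset.sum_range_succ]
    refine h.trans ?_
    have : 1 ≤ 2 ^ (n + 1) := Nat.one_le_two_pow
    rw [mul_add, pow_succ]
    rw [pow_succ] at this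
    refine add_le_add (by nlinarith) (Nat.le_mul_of_pos_left _ this)

lemma brw_le_max (N : ℕ) (jump : ℕ → Fin N → Fin 2 → ℝ) (n : ℕ) (i : Fin N) :
    brw N (fun _ => 0) jump n i ≤ brwMax N jump n :=
  le_ciSup (f := fun i => brw N (fun _ => 0) jump n i) (Set.finite_range _).bddAbove i

lemma brwMin_le (N : ℕ) (jump : ℕ → Fin N → Fin 2 → ℝ) (n : ℕ) (i : Fin N) :
    brwMin N jump n ≤ brw N (fun _ => 0) jump n i :=
  ciInf_le (f := fun i => brw N (fun _ => 0) jump n i) (Set.finite_range _).bddBelow i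

lemma brwMax_mono (N : ℕ) (hN : 0 < N) (jump : ℕ → Fin N → Fin 2 → ℝ)
    (hj : ∀ k i j, 0 ≤ jump k i j) : Monotone (brwMax N jump) := by
  have : Nonempty (Fin N) := ⟨⟨0, hN⟩⟩
  refine monotone_nat_of_le_succ fun n => ?_
  refine ciSup_le fun i => ?_
  refine le_trans ?_ (brw_le_max N jump (n + 1) ⟨N - 1, by omega⟩)
  refine le_of_forall_lt fun t ht => ?_
  change t < brwStep N _ _ _
  rw [brwStep_gt_iff_s4]
  have : 0 < (Finset.univ.filter fun p : Fin N × Fin 2 =>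
      t < brw N (fun _ => 0) jump n p.1 + jump n p.1 p.2).card := by
    rw [Finset.card_pos]
    refine ⟨(i, 0), ?_⟩
    simp
    linarith [hj n i 0]
  simp only
  omega

lemma brwMin_lt_early (N : ℕ) (hN : 0 < N) (jump : ℕ → Fin N → Fin 2 → ℝ)
    (hj : ∀ k i j, 0 ≤ jump k i j) {T n₀ : ℕ} (h : T ≤ n₀) {ε : ℝ} (hε : 0 < ε) :
    brwMin N jump T < brwMax N jump n₀ + ε := by
  have h1 := brwMin_le N jump T ⟨0, hN⟩
  have h2 := brw_le_max N jump T ⟨0, hN⟩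
  have h3 := brwMax_mono N hN jump hj h
  linarith

lemma brw_bad (N : ℕ) (jump : ℕ → Fin N → Fin 2 → ℝ) (n₀ n : ℕ) {ε : ℝ} (hε : 0 < ε)
    (hbad : ¬ brwMin N jump (n₀ + n) < brwMax N jump n₀ + ε) :
    N ≤ 2 ^ n * ∑ k ∈ Finset.range n,
        (Finset.univ.filter fun p : Fin N × Fin 2 => ε / (n + 1) < jump (n₀ + k) p.1 p.2).card := by
  refine le_trans (le_of_eq ?_) (brw_count N jump n₀ _ (ε / (n + 1)) (brw_le_max N jump n₀) n)
  rw [Finset.filter_true_of_mem]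
  · simp
  · intro i _
    have h1 := brwMin_le N jump (n₀ + n) i
    have h2 : n * (ε / (n + 1)) < ε := by
      rw [← mul_div_assoc, div_lt_iff₀ (by positivity)]
      nlinarith
    linarith

lemma brw_measurable {Ω : Type*} [MeasurableSpace Ω] (N : ℕ) (J : ℕ → Fin N → Fin 2 → Ω → ℝ)
    (hJ : ∀ k i j, Measurable (J k i j)) (n : ℕ) (i : Fin N) :
    Measurable fun ω => brw N (fun _ => 0) (fun k i j => J k i j ω) n i := by
  induction n generalizing i with
  | zero => exact measurable_const
  | succ n ih =>
    refine measurable_of_Ioi fun t => ?_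
    have : (fun ω => brw N (fun _ => 0) (fun k i j => J k i j ω) (n + 1) i) ⁻¹' Set.Ioi t =
        {ω | N ≤ (∑ p : Fin N × Fin 2, if t < brw N (fun _ => 0) (fun k i j => J k i j ω) n p.1
          + J n p.1 p.2 ω then 1 else 0) + (i : ℕ)} := by
      ext ω
      simp only [Set.mem_preimage, Set.mem_Ioi, Set.mem_ofPred_eq]
      change t < brwStep N _ _ _ ↔ _
      rw [brwStep_gt_iff_s4, Finset.card_filter]
    rw [this]
    refine measurableSet_le measurable_const (Measurable.add_const ?_ _)
    refine Finset.measurable_sum _ fun p _ => ?_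
    exact Measurable.ite (measurableSet_lt measurable_const ((ih p.1).add (hJ n p.1 p.2)))
      measurable_const measurable_const

lemma measurableSet_good {Ω : Type*} [MeasurableSpace Ω] (N : ℕ)
    (J : ℕ → Fin N → Fin 2 → Ω → ℝ)
    (hJ : ∀ k i j, Measurable (J k i j)) (T n₀ : ℕ) (ε : ℝ) :
    MeasurableSet {ω | brwMin N (fun k i j => J k i j ω) T <
      brwMax N (fun k i j => J k i j ω) n₀ + ε} := by
  refine measurableSet_lt (Measurable.iInf fun i => brw_measurable N J hJ T i) ?_
  exact (Measurable.iSup fun i => brw_measurable N J hJ n₀ i).add_const _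

lemma condExp_bound {Ω : Type*} [m0 : MeasurableSpace Ω] (P : Measure Ω) [IsProbabilityMeasure P]
    (m : MeasurableSpace Ω) (hm : m ≤ m0) (A : Set Ω) (hA : MeasurableSet[m0] A) (d : ℝ) (hd : 0 < d) :
    (P {ω | d < |(P[Set.indicator A (fun _ => (1 : ℝ)) | m]) ω - 1|}).toReal ≤
      (P Aᶜ).toReal / d := by
  set f := P[Set.indicator A (fun _ => (1 : ℝ)) | m] with hf
  have hint : Integrable (Set.indicator A (fun _ => (1 : ℝ))) P :=
    (integrable_const 1).indicator hA
  have hle : f ≤ᵐ[P] fun _ => (1 : ℝ) := by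
    have := condExp_mono (m := m) hint (integrable_const (1 : ℝ))
      (Eventually.of_forall fun ω => Set.indicator_le_self' (fun _ _ => zero_le_one) ω)
    rwa [condExp_const hm] at this
  have hI : ∫ ω, |f ω - 1| ∂P = (P Aᶜ).toReal := by
    have : (fun ω => |f ω - 1|) =ᵐ[P] fun ω => 1 - f ω := by
      filter_upwards [hle] with ω h
      rw [abs_sub_comm, abs_of_nonneg]
      simpa using h
    rw [integral_congr_ae this, integral_sub (integrable_const _) integrable_condExp,
      integral_condExp hm, integral_indicator hA]
    have := prob_compl_eq_one_sub (μ := P) hA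
    rw [this, ENNReal.toReal_sub_of_le prob_le_one ENNReal.one_ne_top]
    simp [measureReal_def]
  rw [← hI, le_div_iff₀ hd, mul_comm]
  refine le_trans ?_ (mul_meas_ge_le_integral_of_nonneg (μ := P) (f := fun ω => |f ω - 1|)
    (Eventually.of_forall fun ω => abs_nonneg _)
    ((integrable_condExp.sub (integrable_const _)).abs) d)
  refine mul_le_mul_of_nonneg_left ?_ hd.le
  refine ENNReal.toReal_mono (measure_ne_top _ _) (measure_mono ?_)
  intro ω h
  exact le_of_lt (by simpa using h)

lemma tail_anti {Ω : Type*} [MeasurableSpace Ω] (P : Measure Ω) [IsProbabilityMeasure P]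
    (X : Ω → ℝ) : Antitone (tail P X) := by
  intro x y h
  exact ENNReal.toReal_mono (measure_ne_top _ _) (measure_mono fun ω hω => lt_of_le_of_lt h hω)

lemma tail_potter {Ω : Type*} [MeasurableSpace Ω] (P : Measure Ω) [IsProbabilityMeasure P]
    (X : Ω → ℝ) (α : ℝ)
    (hRV : ∀ l : ℝ, 0 < l →
      Tendsto (fun x => tail P X x / tail P X (l * x)) atTop (nhds (l ^ α))) :
    ∃ (C : ℝ) (q : ℕ), 0 < C ∧ ∀ (m : ℕ) (x : ℝ), tail P X x ≤
      C * ((2 : ℝ) ^ m) ^ q * tail P X (2 ^ m * x) := by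
  have h2 := hRV 2 two_pos
  have hpos : (0 : ℝ) < 2 ^ α := by positivity
  obtain ⟨x0, hx0⟩ := eventually_atTop.1 ((h2.eventually (lt_mem_nhds hpos)).and
    (h2.eventually (gt_mem_nhds (lt_add_one ((2 : ℝ) ^ α)))))
  obtain ⟨q, hq⟩ := pow_unbounded_of_one_lt ((2 : ℝ) ^ α + 1) one_lt_two
  set x1 := max x0 0 with hx1
  have tpos : ∀ x, 0 ≤ tail P X x := fun x => ENNReal.toReal_nonneg
  have t1 : ∀ x, tail P X x ≤ 1 := fun x => by
    have := ENNReal.toReal_mono ENNReal.one_ne_top (prob_le_one (μ := P) (s := {ω | x < X ω}))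
    simpa [tail] using this
  have step : ∀ x, x1 ≤ x → tail P X x ≤ 2 ^ q * tail P X (2 * x) := by
    intro x hx
    obtain ⟨ha, hb⟩ := hx0 x ((le_max_left _ _).trans hx)
    have h0 : 0 < tail P X (2 * x) := by
      rcases (tpos (2 * x)).eq_or_lt with h | h
      · rw [← h] at ha; simp at ha
      · exact h
    rw [div_lt_iff₀ h0] at hb
    nlinarith
  have hx1pos : 0 < tail P X x1 := by
    obtain ⟨ha, hb⟩ := hx0 x1 (le_max_left _ _)
    rcases (tpos x1).eq_or_lt with h | h
    · rw [← h] at ha; simp at ha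
    · exact h
  have iter : ∀ (m : ℕ) x, x1 ≤ x → tail P X x ≤ ((2 : ℝ) ^ m) ^ q * tail P X (2 ^ m * x) := by
    intro m
    induction m with
    | zero => intro x _; simp
    | succ m ih =>
      intro x hx
      have hxx : x1 ≤ 2 * x := by
        have : 0 ≤ x1 := le_max_right _ _
        linarith
      calc _ ≤ 2 ^ q * tail P X (2 * x) := step x hx
        _ ≤ 2 ^ q * (((2 : ℝ) ^ m) ^ q * tail P X (2 ^ m * (2 * x))) := by
            gcongr; exact ih _ hxx
        _ = _ := by
            rw [pow_succ, mul_pow, ← mul_assoc (2 ^ m) 2 x]; ring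
  refine ⟨1 / tail P X x1, q, by positivity, fun m x => ?_⟩
  rw [mul_assoc, one_div, ← div_eq_inv_mul, le_div_iff₀ hx1pos]
  rcases le_total x1 x with h | h
  · calc _ ≤ tail P X x * 1 := by gcongr; exacts [tpos _, t1 _]
      _ ≤ _ := by rw [mul_one]; exact iter m x h
  · calc _ ≤ 1 * tail P X x1 := by gcongr; exact t1 _
      _ ≤ ((2 : ℝ) ^ m) ^ q * tail P X (2 ^ m * x1) := by rw [one_mul]; exact iter m x1 le_rfl
      _ ≤ _ := by
        gcongr
        exact tail_anti P X (by gcongr)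

lemma tail_hinv {Ω : Type*} [MeasurableSpace Ω] (P : Measure Ω) [IsProbabilityMeasure P]
    (X : Ω → ℝ) (y x : ℝ) (h0 : hinv P X y ≠ 0) (hx : hinv P X y < x) : tail P X x ≤ y⁻¹ := by
  have hne : {x : ℝ | 0 ≤ x ∧ tail P X x ≤ y⁻¹}.Nonempty := by
    by_contra h
    rw [Set.not_nonempty_iff_eq_empty] at h
    apply h0
    rw [hinv, h, Real.sInf_empty]
  obtain ⟨s, hs, hsx⟩ := exists_lt_of_csInf_lt hne hx
  exact (tail_anti P X hsx.le).trans hs.2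

lemma hinv_nonneg {Ω : Type*} [MeasurableSpace Ω] (P : Measure Ω)
    (X : Ω → ℝ) (y : ℝ) : 0 ≤ hinv P X y := Real.sInf_nonneg fun _ h => h.1

/-- One-jump probability bound. -/
lemma jump_prob {Ω : Type*} [MeasurableSpace Ω] (P : Measure Ω) [IsProbabilityMeasure P]
    (X : Ω → ℝ) (C : ℝ) (q : ℕ) (hC : 0 < C) (hP : ∀ (m : ℕ) (x : ℝ), tail P X x ≤
      C * ((2 : ℝ) ^ m) ^ q * tail P X (2 ^ m * x)) (y : ℝ) (hy : 0 < y) (η : ℝ) (hη : 0 < η)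
    (hη1 : η ≤ 1) (hXmeas : Measurable X) (Z : Ω → ℝ) (hZ : Measurable Z)
    (hd : Measure.map Z P = Measure.map X P) :
    P.real {ω | η < Z ω / hinv P X y} ≤ C * (2 / η) ^ q * y⁻¹ := by
  by_cases h0 : hinv P X y = 0
  · simp only [h0, div_zero, not_lt.2 hη.le, Set.ofPred_false, measureReal_empty]
    positivity
  have hc : 0 < hinv P X y := lt_of_le_of_ne (hinv_nonneg P X y) (Ne.symm h0)
  have e : P.real {ω | η < Z ω / hinv P X y} = tail P X (η * hinv P X y) := by
    simp only [lt_div_iff₀ hc]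
    have h1 := Measure.map_apply (μ := P) hZ (measurableSet_Ioi (a := η * hinv P X y))
    have h2 := Measure.map_apply (μ := P) hXmeas (measurableSet_Ioi (a := η * hinv P X y))
    rw [hd, h2] at h1
    rw [measureReal_def, tail]
    exact congrArg ENNReal.toReal h1.symm
  rw [e]
  obtain ⟨m, hm1, hm2⟩ := exists_nat_pow_near ((one_le_div hη).2 hη1) (one_lt_two (α := ℝ))
  refine (hP (m + 1) _).trans ?_
  gcongr
  · exact ENNReal.toReal_nonneg
  · rw [pow_succ, div_eq_mul_one_div, mul_comm]
    gcongr
  · apply tail_hinv P X y _ h0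
    rw [div_lt_iff₀ hη] at hm2
    rw [← mul_assoc]
    nlinarith

lemma final_bound_s4 {Ω : Type*} [MeasurableSpace Ω] (P : Measure Ω) [IsProbabilityMeasure P]
    (N : ℕ) (hN : 0 < N) (J : ℕ → Fin N → Fin 2 → Ω → ℝ)
    (hJ : ∀ k i j, Measurable (J k i j)) (n₀ n : ℕ) (ε : ℝ) (hε : 0 < ε) (τ : ℝ)
    (hτ : ∀ k i j, P.real {ω | ε / (n + 1) < J k i j ω} ≤ τ) :
    P.real {ω | brwMin N (fun k i j => J k i j ω) (n₀ + n) <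
      brwMax N (fun k i j => J k i j ω) n₀ + ε}ᶜ ≤ 2 ^ n * n * 2 * τ := by
  set g : Ω → ℝ := fun ω => 2 ^ n * ∑ k ∈ Finset.range n, ∑ p : Fin N × Fin 2,
    Set.indicator {ω | ε / (n + 1) < J (n₀ + k) p.1 p.2 ω} (fun _ => (1 : ℝ)) ω with hg
  have hms : ∀ k (p : Fin N × Fin 2), MeasurableSet {ω | ε / (n + 1) < J (n₀ + k) p.1 p.2 ω} :=
    fun k p => measurableSet_lt measurable_const (hJ _ _ _)
  have hii : ∀ k (p : Fin N × Fin 2), Integrable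
      (Set.indicator {ω | ε / (n + 1) < J (n₀ + k) p.1 p.2 ω} (fun _ => (1 : ℝ))) P :=
    fun k p => (integrable_const 1).indicator (hms k p)
  have hgi : Integrable g P := by
    refine Integrable.const_mul ?_ _
    exact integrable_finsetSum _ fun k _ => integrable_finsetSum _ fun p _ => hii k p
  have hg0 : ∀ ω, 0 ≤ g ω := by
    intro ω
    refine mul_nonneg (by positivity) (Finset.sum_nonneg fun k _ => Finset.sum_nonneg fun p _ => ?_)
    exact Set.indicator_nonneg (fun _ _ => zero_le_one) _
  have hint : ∫ ω, g ω ∂P ≤ 2 ^ n * (n * ((N * 2 : ℕ) * τ)) := by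
    rw [hg, integral_const_mul]
    gcongr
    rw [integral_finsetSum _ fun k _ => integrable_finsetSum _ fun p _ => hii k p]
    have : ∀ k ∈ Finset.range n, ∫ ω, ∑ p : Fin N × Fin 2,
        Set.indicator {ω | ε / (n + 1) < J (n₀ + k) p.1 p.2 ω} (fun _ => (1 : ℝ)) ω ∂P
        ≤ (N * 2 : ℕ) * τ := by
      intro k _
      rw [integral_finsetSum _ fun p _ => hii k p]
      refine (Finset.sum_le_card_nsmul _ _ τ fun p _ => ?_).trans ?_
      · rw [integral_indicator (hms k p)]
        simpa using hτ (n₀ + k) p.1 p.2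
      · simp
    refine (Finset.sum_le_card_nsmul _ _ _ this).trans ?_
    simp
  have hmk := mul_meas_ge_le_integral_of_nonneg (μ := P) (Eventually.of_forall hg0) hgi (N : ℝ)
  have hsub : P.real {ω | brwMin N (fun k i j => J k i j ω) (n₀ + n) <
      brwMax N (fun k i j => J k i j ω) n₀ + ε}ᶜ ≤ P.real {ω | (N : ℝ) ≤ g ω} := by
    refine measureReal_mono ?_
    intro ω hω
    have h := brw_bad N (fun k i j => J k i j ω) n₀ n hε hω
    have h' : (N : ℝ) ≤ _ := Nat.cast_le.2 h
    refine h'.trans (le_of_eq ?_)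
    simp only [hg, Set.indicator_apply, Set.mem_ofPred_eq, Finset.sum_boole, Nat.cast_mul,
      Nat.cast_pow, Nat.cast_ofNat, Nat.cast_sum]
  have hN' : (0 : ℝ) < N := by exact_mod_cast hN
  have h3 : (N : ℝ) * P.real {ω | brwMin N (fun k i j => J k i j ω) (n₀ + n) <
      brwMax N (fun k i j => J k i j ω) n₀ + ε}ᶜ ≤ N * (2 ^ n * n * 2 * τ) := by
    calc _ ≤ (N : ℝ) * P.real {ω | (N : ℝ) ≤ g ω} := by gcongr
      _ ≤ _ := hmk
      _ ≤ _ := hint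
      _ = _ := by push_cast; ring
  exact le_of_mul_le_mul_left h3 hN'

/-- The limiting bound in terms of `L = log₂ N`. -/
lemma bound_tendsto (C ε : ℝ) (q : ℕ) (hε : 0 < ε) :
    Tendsto (fun N : ℕ => C * (2 * (Real.logb 2 N + 1) / ε) ^ q * (2 : ℝ) ^ (-(ε * Real.logb 2 N)))
      atTop (nhds 0) := by
  have hL : Tendsto (fun N : ℕ => Real.logb 2 (N : ℝ) + 1) atTop atTop :=
    tendsto_atTop_add_const_right _ _
      ((Real.tendsto_logb_atTop one_lt_two).comp tendsto_natCast_atTop_atTop)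
  have hb : 0 < ε * Real.log 2 := mul_pos hε (Real.log_pos one_lt_two)
  have h := (tendsto_rpow_mul_exp_neg_mul_atTop_nhds_zero (q : ℝ) _ hb).comp hL
  have h2 := h.const_mul (C * (2 / ε) ^ q * Real.exp (ε * Real.log 2))
  rw [mul_zero] at h2
  refine h2.congr fun N => ?_
  simp only [Function.comp, Real.rpow_natCast]
  rw [Real.rpow_def_of_pos two_pos]
  have : Real.exp (Real.log 2 * -(ε * Real.logb 2 N)) = Real.exp (ε * Real.log 2) *
      Real.exp (-(ε * Real.log 2) * (Real.logb 2 N + 1)) := by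
    rw [← Real.exp_add]; congr 1; ring
  rw [this, mul_div_right_comm, mul_pow]
  ring

lemma main_bound {Ω : Type*} [MeasurableSpace Ω] (P : Measure Ω) [IsProbabilityMeasure P]
    (X : Ω → ℝ) (hXmeas : Measurable X)
    (α : ℝ)
    (hRV : ∀ l : ℝ, 0 < l →
      Tendsto (fun x => tail P X x / tail P X (l * x)) atTop (nhds (l ^ α)))
    (ξ : (N : ℕ) → ℕ → Fin N → Fin 2 → Ω → ℝ)
    (hξmeas : ∀ N n i j, Measurable (ξ N n i j))
    (hξpos : ∀ N n i j ω, 0 ≤ ξ N n i j ω)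
    (hξdist : ∀ N n i j, Measure.map (ξ N n i j) P = Measure.map X P)
    (n₀ : ℕ) (ε : ℝ) (hε : 0 < ε) :
    Tendsto (fun N : ℕ =>
      P.real {ω | brwMin N (fun k i j => ξ N k i j ω / cN P X N)
            ((↑n₀ + ⌊(1 - ε) * Real.logb 2 N⌋).toNat) <
          brwMax N (fun k i j => ξ N k i j ω / cN P X N) n₀ + ε}ᶜ)
      atTop (nhds 0) := by
  obtain ⟨C, q, hC, hP⟩ := tail_potter P X α hRV
  refine tendsto_of_tendsto_of_tendsto_of_le_of_le' tendsto_const_nhds (bound_tendsto C ε q hε)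
    (Eventually.of_forall fun N => measureReal_nonneg) ?_
  filter_upwards [eventually_ge_atTop 2] with N hN
  have hN0 : 0 < N := by omega
  have hNr : (2 : ℝ) ≤ N := by exact_mod_cast hN
  set L := Real.logb 2 (N : ℝ) with hLdef
  have hL1 : 1 ≤ L := by
    rw [hLdef, Real.le_logb_iff_rpow_le one_lt_two (by positivity)]
    simpa using hNr
  have h2L : (2 : ℝ) ^ L = N := Real.rpow_logb two_pos (by norm_num) (by positivity)
  have hcpos : 0 ≤ cN P X N := hinv_nonneg P X _
  set T := ((n₀ : ℤ) + ⌊(1 - ε) * L⌋).toNat with hT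
  by_cases hTn : T ≤ n₀
  · have : {ω | brwMin N (fun k i j => ξ N k i j ω / cN P X N) T <
          brwMax N (fun k i j => ξ N k i j ω / cN P X N) n₀ + ε}ᶜ = ∅ := by
      rw [Set.compl_empty_iff, Set.eq_univ_iff_forall]
      intro ω
      exact brwMin_lt_early N hN0 _ (fun k i j => div_nonneg (hξpos _ _ _ _ _) hcpos) hTn hε
    rw [this, measureReal_empty]
    positivity
  push Not at hTn
  obtain ⟨n, hn⟩ := Nat.exists_eq_add_of_lt hTn
  have hfl : ((n + 1 : ℕ) : ℤ) = ⌊(1 - ε) * L⌋ := by omega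
  have hnL : ((n + 1 : ℕ) : ℝ) ≤ (1 - ε) * L := by
    have := Int.floor_le ((1 - ε) * L)
    rw [← hfl] at this
    exact_mod_cast this
  have hTe : T = n₀ + (n + 1) := by omega
  rw [hTe]
  generalize n + 1 = k at hnL
  have hk0 : (0 : ℝ) ≤ k := Nat.cast_nonneg k
  have hε1 : ε ≤ 1 := by
    by_contra h
    push Not at h
    have : 1 ≤ T - n₀ := by omega
    have h5 : ⌊(1 - ε) * L⌋ ≤ 0 := by
      rw [← Int.lt_add_one_iff, Int.floor_lt]
      push_cast
      nlinarith
    omega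
  have hkL : (k : ℝ) ≤ L := by nlinarith
  have hy : 0 < 2 * (N : ℝ) * L := by positivity
  have hη : 0 < ε / (k + 1) := by positivity
  have hη1 : ε / (k + 1) ≤ 1 := by
    rw [div_le_one (by positivity)]; linarith
  have hfb := final_bound_s4 P N hN0 (fun k i j ω => ξ N k i j ω / cN P X N)
    (fun k i j => (hξmeas N k i j).div_const _) n₀ k ε hε
    (C * (2 / (ε / (k + 1))) ^ q * (2 * (N : ℝ) * L)⁻¹)
    (fun k' i j => jump_prob P X C q hC hP _ hy _ hη hη1 hXmeas _ (hξmeas N k' i j)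
      (hξdist N k' i j))
  refine hfb.trans ?_
  have e1 : (2 : ℝ) ^ k ≤ 2 ^ (-(ε * L)) * N := by
    rw [← h2L, ← Real.rpow_add two_pos, ← Real.rpow_natCast]
    apply Real.rpow_le_rpow_of_exponent_le one_le_two
    linarith
  have e2 : 2 / (ε / (k + 1)) ≤ 2 * (L + 1) / ε := by
    rw [div_div_eq_mul_div]
    gcongr
  have hNpos : (0 : ℝ) < N := by positivity
  calc _ ≤ (2 ^ (-(ε * L)) * N) * L * 2 * (C * (2 * (L + 1) / ε) ^ q * (2 * (N : ℝ) * L)⁻¹) := by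
        gcongr
    _ = _ := by
        have : L ≠ 0 := by positivity
        field_simp

/-- Lemma "upper_min": for every `n₀ ≥ 0` and `ε > 0`,
`P(𝒴_1(n₀ + ⌊(1−ε) log₂ N⌋) < 𝒴_N(n₀) + ε | F_{n₀}) → 1` in probability as `N → ∞`;
in particular the unconditional probability tends to `1`. -/
theorem stmt_4 {Ω : Type*} [MeasurableSpace Ω] (P : Measure Ω) [IsProbabilityMeasure P]
    (X : Ω → ℝ) (hXmeas : Measurable X) (hXpos : ∀ ω, 0 ≤ X ω)
    (α : ℝ) (hα : 0 < α)
    (hRV : ∀ l : ℝ, 0 < l →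
      Tendsto (fun x => tail P X x / tail P X (l * x)) atTop (nhds (l ^ α)))
    (ξ : (N : ℕ) → ℕ → Fin N → Fin 2 → Ω → ℝ)
    (hξmeas : ∀ N n i j, Measurable (ξ N n i j))
    (hξpos : ∀ N n i j ω, 0 ≤ ξ N n i j ω)
    (hξdist : ∀ N n i j, Measure.map (ξ N n i j) P = Measure.map X P)
    (hξindep : ∀ N, iIndepFun
      (fun p : ℕ × Fin N × Fin 2 => ξ N p.1 p.2.1 p.2.2) P)
    (n₀ : ℕ) (ε : ℝ) (hε : 0 < ε) :
    (∀ d : ℝ, 0 < d →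
      Tendsto (fun N : ℕ =>
        (P {ω | d < |(P[Set.indicator
            {ω' | brwMin N (fun k i j => ξ N k i j ω' / cN P X N)
                ((↑n₀ + ⌊(1 - ε) * Real.logb 2 N⌋).toNat) <
              brwMax N (fun k i j => ξ N k i j ω' / cN P X N) n₀ + ε}
            (fun _ => (1 : ℝ)) | brwFilt N (ξ N) n₀]) ω - 1|}).toReal)
        atTop (nhds 0)) ∧
    Tendsto (fun N : ℕ =>
      (P {ω | brwMin N (fun k i j => ξ N k i j ω / cN P X N)
            ((↑n₀ + ⌊(1 - ε) * Real.logb 2 N⌋).toNat) <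
          brwMax N (fun k i j => ξ N k i j ω / cN P X N) n₀ + ε}).toReal)
      atTop (nhds 1) := by
  have hmain := main_bound P X hXmeas α hRV ξ hξmeas hξpos hξdist n₀ ε hε
  have hmeas : ∀ N, MeasurableSet {ω | brwMin N (fun k i j => ξ N k i j ω / cN P X N)
            ((↑n₀ + ⌊(1 - ε) * Real.logb 2 N⌋).toNat) <
          brwMax N (fun k i j => ξ N k i j ω / cN P X N) n₀ + ε} := fun N =>
    measurableSet_good N (fun k i j ω => ξ N k i j ω / cN P X N)
      (fun k i j => (hξmeas N k i j).div_const _) _ _ _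
  constructor
  · intro d hd
    have h := hmain.div_const d
    rw [zero_div] at h
    refine squeeze_zero (fun N => ENNReal.toReal_nonneg) (fun N => ?_) h
    refine condExp_bound P (brwFilt N (ξ N) n₀) ?_ _ (hmeas N) d hd
    refine iSup_le fun k => iSup_le fun _ => iSup_le fun i => iSup_le fun j => ?_
    exact (hξmeas N k i j).comap_le
  · have h := hmain.const_sub 1
    rw [sub_zero] at h
    refine h.congr fun N => ?_
    rw [probReal_compl_eq_one_sub (hmeas N), sub_sub_cancel, measureReal_def]

end
end

section
/- Pointwise on the underlying probability space: for every n ≥ 0, X_1(n) ≤ X_N(n), and for every n ≥ ⌈log₂ N⌉, X_N(n − ⌈log₂ N⌉) ≤ X_1(n). -/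
open MeasureTheory ProbabilityTheory Real Filter Set

noncomputable section

/-- In a sorted list with many entries above `c`, the high-index entries are above `c`. -/
theorem sorted_getElem_ge (l : List ℝ) (hl : l.Pairwise (· ≤ ·)) (c : ℝ) (k : ℕ)
    (hk : k < l.length) (hc : l.length ≤ k + l.countP (fun x => decide (c ≤ x))) : c ≤ l[k] := by
  by_contra hlt
  push Not at hlt
  have h1 : (l.take (k + 1)).countP (fun x => decide (c ≤ x)) = 0 := by
    rw [List.countP_eq_zero]
    intro x hx
    obtain ⟨j, hj, rfl⟩ := List.mem_iff_getElem.1 hx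
    rw [List.length_take] at hj
    have hj1 : j < l.length := by omega
    have : l[j] ≤ l[k] := by
      rcases Nat.lt_or_ge j k with h | h
      · exact List.pairwise_iff_getElem.1 hl j k hj1 hk h
      · have : j = k := by omega
        subst this
        exact le_rfl
    simp only [List.getElem_take, decide_eq_true_eq, not_le]
    exact lt_of_le_of_lt this hlt
  have h2 : l.countP (fun x => decide (c ≤ x)) = (l.take (k + 1)).countP (fun x => decide (c ≤ x))
      + (l.drop (k + 1)).countP (fun x => decide (c ≤ x)) := by
    rw [← List.countP_append, List.take_append_drop]
  have h3 := List.countP_le_length (p := fun x => decide (c ≤ x)) (l := l.drop (k + 1))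
  rw [List.length_drop] at h3
  omega

/-- One step at least doubles the number of particles above `c` (capped by `N`). -/
theorem brwStep_count_s8 (N : ℕ) (pos : Fin N → ℝ) (jump : Fin N → Fin 2 → ℝ)
    (hj : ∀ i j, 0 ≤ jump i j) (c : ℝ) (m : ℕ)
    (hm : m ≤ (Finset.univ.filter fun i => c ≤ pos i).card) (i : Fin N) (hi : N ≤ i + 2 * m) :
    c ≤ brwStep N pos jump i := by
  unfold brwStep
  set M := ((Finset.univ : Finset (Fin N × Fin 2)).val.map fun p => pos p.1 + jump p.1 p.2) with hM
  have hlen : (M.sort (· ≤ ·)).length = 2 * N := by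
    rw [Multiset.length_sort, hM, Multiset.card_map, Finset.card_val]
    simp [mul_comm]
  have hcount : 2 * m ≤ (M.sort (· ≤ ·)).countP (fun x => decide (c ≤ x)) := by
    have e : (M.sort (· ≤ ·)).countP (fun x => decide (c ≤ x)) = M.countP (fun x => c ≤ x) := by
      conv_rhs => rw [← Multiset.sort_eq M (· ≤ ·)]
      rw [Multiset.coe_countP]
    rw [e, hM, Multiset.countP_map]
    have h1 : ((Finset.univ.filter fun i => c ≤ pos i) ×ˢ (Finset.univ : Finset (Fin 2))).card
        ≤ (Finset.univ.filter fun p : Fin N × Fin 2 => c ≤ pos p.1 + jump p.1 p.2).card := by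
      apply Finset.card_le_card
      intro p hp
      simp only [Finset.mem_product, Finset.mem_filter, Finset.mem_univ, true_and, and_true] at hp ⊢
      linarith [hj p.1 p.2]
    rw [Finset.card_product, Finset.card_univ, Fintype.card_fin] at h1
    change 2 * m ≤ (Finset.univ.filter fun p : Fin N × Fin 2 => c ≤ pos p.1 + jump p.1 p.2).card
    omega
  have hk : N + (i : ℕ) < (M.sort (· ≤ ·)).length := by omega
  rw [List.getD_eq_getElem _ _ hk]
  exact sorted_getElem_ge _ (Multiset.pairwise_sort M (· ≤ ·)) c _ hk (by omega)

/-- After `k` steps, at least `min N (2 ^ k)` particles are above an initial particle. -/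
theorem brw_count_s8 (N : ℕ) (x0 : Fin N → ℝ) (jump : ℕ → Fin N → Fin 2 → ℝ)
    (hj : ∀ n i j, 0 ≤ jump n i j) (n : ℕ) (i₀ : Fin N) (k : ℕ) :
    min N (2 ^ k) ≤
      (Finset.univ.filter fun i => brw N x0 jump n i₀ ≤ brw N x0 jump (n + k) i).card := by
  induction k with
  | zero =>
    have : 0 < (Finset.univ.filter fun i => brw N x0 jump n i₀ ≤ brw N x0 jump (n + 0) i).card :=
      Finset.card_pos.2 ⟨i₀, by simp⟩
    simp only [pow_zero]
    omega
  | succ k ih =>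
    have hstep := brwStep_count_s8 N (brw N x0 jump (n + k)) (jump (n + k)) (hj _) _ _ ih
    have hsub : (Finset.univ.filter fun i : Fin N => N ≤ i + 2 * min N (2 ^ k)) ⊆
        (Finset.univ.filter fun i => brw N x0 jump n i₀ ≤ brw N x0 jump (n + (k + 1)) i) := by
      intro i hi
      simp only [Finset.mem_filter, Finset.mem_univ, true_and] at hi ⊢
      exact hstep i hi
    refine le_trans ?_ (Finset.card_le_card hsub)
    have hc := Finset.card_filter_add_card_filter_not (s := (Finset.univ : Finset (Fin N)))
      (fun i : Fin N => N ≤ i + 2 * min N (2 ^ k))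
    have hn : (Finset.univ.filter fun i : Fin N => ¬ N ≤ i + 2 * min N (2 ^ k)).card ≤
        N - 2 * min N (2 ^ k) := by
      rw [← Finset.card_range (N - 2 * min N (2 ^ k))]
      apply Finset.card_le_card_of_injOn (fun i : Fin N => (i : ℕ))
      · intro i hi
        simp only [Finset.coe_filter, Finset.mem_univ, true_and, Set.mem_setOf_eq] at hi
        simp only [Finset.coe_range, Set.mem_Iio]
        omega
      · exact fun a _ b _ h => Fin.ext h
    rw [Finset.card_univ, Fintype.card_fin] at hc
    rw [pow_succ]
    omega

/-- pointwise on the underlying probability space, `X_1(n) ≤ X_N(n)` for every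
`n ≥ 0`, and `X_N(n − ⌈log₂ N⌉) ≤ X_1(n)` for every `n ≥ ⌈log₂ N⌉`. -/
theorem stmt_8 {Ω : Type*} [MeasurableSpace Ω] (P : Measure Ω) [IsProbabilityMeasure P]
    (X : Ω → ℝ) (hXmeas : Measurable X) (hXpos : ∀ ω, 0 ≤ X ω)
    (N : ℕ) (hN : 1 ≤ N)
    (ξ : ℕ → Fin N → Fin 2 → Ω → ℝ)
    (hξmeas : ∀ n i j, Measurable (ξ n i j))
    (hξpos : ∀ n i j ω, 0 ≤ ξ n i j ω)
    (hξdist : ∀ n i j, Measure.map (ξ n i j) P = Measure.map X P)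
    (hξindep : iIndepFun
      (fun p : ℕ × Fin N × Fin 2 => ξ p.1 p.2.1 p.2.2) P)
    (ω : Ω) :
    (∀ n : ℕ, brwMin N (fun k i j => ξ k i j ω) n ≤ brwMax N (fun k i j => ξ k i j ω) n) ∧
    (∀ n : ℕ, Nat.clog 2 N ≤ n →
      brwMax N (fun k i j => ξ k i j ω) (n - Nat.clog 2 N) ≤
        brwMin N (fun k i j => ξ k i j ω) n) := by
  have hne : Nonempty (Fin N) := ⟨⟨0, hN⟩⟩
  constructor
  · intro n
    exact (ciInf_le (Set.finite_range _).bddBelow ⟨0, hN⟩).trans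
      (le_ciSup (f := fun i => brw N (fun _ => 0) (fun k i j => ξ k i j ω) n i)
        (Set.finite_range _).bddAbove ⟨0, hN⟩)
  · intro n hn
    refine ciSup_le fun i₀ => le_ciInf fun i => ?_
    have h := brw_count_s8 N (fun _ => 0) (fun k i j => ξ k i j ω) (fun n i j => hξpos n i j ω)
      (n - Nat.clog 2 N) i₀ (Nat.clog 2 N)
    rw [min_eq_left (Nat.le_pow_clog (by norm_num) N), Nat.sub_add_cancel hn] at h
    have h2 := (Finset.card_eq_iff_eq_univ _).1
      (le_antisymm (Finset.card_le_univ _) (by rwa [Fintype.card_fin]))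
    have h3 := Finset.mem_univ i
    rw [← h2] at h3
    exact (Finset.mem_filter.1 h3).2

end
end

section
/- Let T be a stopping time with respect to the filtration (F_n)_{n≥0}, almost surely finite and taking values in ℕ. Then for every integer k ≥ 0 and every x ≥ 0, P( X_N(T+k) − X_N(T) > x ) ≤ P( X_N(k) > x ). -/
open MeasureTheory ProbabilityTheory Real Filter Set

noncomputable section

def kStat {ι : Type*} [Fintype ι] (m : ℕ) (f : ι → ℝ) : ℝ :=
  (((Finset.univ : Finset ι).val.map f).sort (· ≤ ·)).getD m 0

lemma kStat_le_iff {ι : Type*} [Fintype ι] (m : ℕ) (hm : m < Fintype.card ι) (f : ι → ℝ) (a : ℝ) :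
    kStat m f ≤ a ↔ m < ((Finset.univ : Finset ι).filter (fun i => f i ≤ a)).card := by
  classical
  set l := ((Finset.univ : Finset ι).val.map f).sort (· ≤ ·) with hl
  have hlen : l.length = Fintype.card ι := by
    rw [hl, Multiset.length_sort, Multiset.card_map]; rfl
  have hml : m < l.length := by omega
  have hs : Monotone l.get := 
    (List.Pairwise.sortedLE (Multiset.pairwise_sort _ _)).monotone_get
  have h := Tuple.lt_card_le_iff_apply_le_of_monotone (f := l.get) (a := a) (j := ⟨m, hml⟩) hs
  have e : kStat m f = l.get ⟨m, hml⟩ := by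
    simp only [kStat, ← hl, List.get_eq_getElem]
    exact List.getD_eq_getElem _ _ hml
  rw [e, ← h]
  have h1 : (Finset.univ.val.map l.get) = (Finset.univ : Finset ι).val.map f := by
    rw [Fin.univ_val_map, List.ofFn_get, hl, Multiset.sort_eq]
  have h2 := congrArg (Multiset.countP (fun y => y ≤ a)) h1
  rw [Multiset.countP_map, Multiset.countP_map] at h2
  change m < _ ↔ _
  rw [Finset.card_def, Finset.card_def, Finset.filter_val, Finset.filter_val, h2]

lemma kStat_mono {ι : Type*} [Fintype ι] (m : ℕ) (hm : m < Fintype.card ι) {f g : ι → ℝ}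
    (h : ∀ i, f i ≤ g i) : kStat m f ≤ kStat m g := by
  rw [kStat_le_iff m hm]
  refine lt_of_lt_of_le ((kStat_le_iff m hm g _).1 le_rfl) (Finset.card_le_card ?_)
  intro i hi
  simp only [Finset.mem_filter, Finset.mem_univ, true_and] at hi ⊢
  exact (h i).trans hi

lemma kStat_add {ι : Type*} [Fintype ι] (m : ℕ) (hm : m < Fintype.card ι) (f : ι → ℝ) (c : ℝ) :
    kStat m (fun i => f i + c) = kStat m f + c := by
  refine eq_of_forall_ge_iff fun a => ?_
  rw [← le_sub_iff_add_le, kStat_le_iff m hm, kStat_le_iff m hm]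
  simp only [le_sub_iff_add_le]

lemma kStat_measurable {ι : Type*} [Fintype ι] (m : ℕ) (hm : m < Fintype.card ι) :
    Measurable (kStat m : (ι → ℝ) → ℝ) := by
  refine (LipschitzWith.continuous (K := 1) (LipschitzWith.of_le_add fun f g => ?_)).measurable
  rw [← kStat_add m hm]
  refine kStat_mono m hm fun i => ?_
  have := dist_le_pi_dist f g i
  rw [Real.dist_eq] at this
  linarith [le_abs_self (f i - g i)]

lemma brwStep_eq_s9 (N : ℕ) (pos : Fin N → ℝ) (jump : Fin N → Fin 2 → ℝ) (i : Fin N) :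
    brwStep N pos jump i = kStat (N + i) (fun p : Fin N × Fin 2 => pos p.1 + jump p.1 p.2) := rfl

lemma idx_lt (N : ℕ) (i : Fin N) : N + i < Fintype.card (Fin N × Fin 2) := by
  simp; omega

lemma brw_mono (N : ℕ) {x y : Fin N → ℝ} (h : ∀ i, x i ≤ y i) (jump : ℕ → Fin N → Fin 2 → ℝ)
    (n : ℕ) : ∀ i, brw N x jump n i ≤ brw N y jump n i := by
  induction n with
  | zero => exact h
  | succ n ih =>
    intro i
    simp only [brw, brwStep_eq_s9]
    exact kStat_mono _ (idx_lt N i) fun p => by linarith [ih p.1]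

lemma brw_const (N : ℕ) (c : ℝ) (jump : ℕ → Fin N → Fin 2 → ℝ)
    (n : ℕ) : ∀ i, brw N (fun _ => c) jump n i = brw N (fun _ => 0) jump n i + c := by
  induction n with
  | zero => intro i; simp [brw]
  | succ n ih =>
    intro i
    simp only [brw, brwStep_eq_s9]
    rw [← kStat_add _ (idx_lt N i)]
    congr 1
    funext p
    rw [ih]; ring

lemma brw_shift (N : ℕ) (x : Fin N → ℝ) (jump : ℕ → Fin N → Fin 2 → ℝ) (n k : ℕ) :
    brw N x jump (n + k) = brw N (brw N x jump n) (fun a => jump (n + a)) k := by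
  induction k with
  | zero => rfl
  | succ k ih =>
    rw [← add_assoc]
    simp only [brw]
    rw [ih]

lemma brwMax_sub (N : ℕ) (hN : 1 ≤ N) (jump : ℕ → Fin N → Fin 2 → ℝ) (n k : ℕ) :
    brwMax N jump (n + k) - brwMax N jump n ≤ brwMax N (fun a => jump (n + a)) k := by
  haveI : Nonempty (Fin N) := ⟨⟨0, hN⟩⟩
  rw [sub_le_iff_le_add]
  refine ciSup_le fun i => ?_
  rw [brw_shift]
  refine (brw_mono N (y := fun _ => brwMax N jump n) (fun j => ?_) _ k i).trans ?_
  · exact le_ciSup (f := fun j => brw N (fun _ => 0) jump n j) (Set.finite_range _).bddAbove j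
  · rw [brw_const]
    have : brw N (fun _ => 0) (fun a => jump (n + a)) k i ≤ brwMax N (fun a => jump (n + a)) k :=
      le_ciSup (f := fun j => brw N (fun _ => 0) (fun a => jump (n + a)) k j)
        (Set.finite_range _).bddAbove i
    linarith

lemma brwMax_measurable (N k : ℕ) :
    Measurable (fun z : ℕ × Fin N × Fin 2 → ℝ => brwMax N (fun a b c => z (a, b, c)) k) := by
  have h : ∀ i, Measurable (fun z : ℕ × Fin N × Fin 2 → ℝ =>
      brw N (fun _ => 0) (fun a b c => z (a, b, c)) k i) := by
    induction k with
    | zero => intro i; exact measurable_const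
    | succ k ih =>
      intro i
      simp only [brw, brwStep_eq_s9]
      refine (kStat_measurable _ (idx_lt N i)).comp (measurable_pi_lambda _ fun p => ?_)
      exact (ih p.1).add (measurable_pi_apply _)
  exact Measurable.iSup h

lemma brw_law {Ω : Type*} [MeasurableSpace Ω] (P : Measure Ω) [IsProbabilityMeasure P]
    (X : Ω → ℝ) (hXmeas : Measurable X) (N : ℕ)
    (ξ : ℕ → Fin N → Fin 2 → Ω → ℝ)
    (hξmeas : ∀ n i j, Measurable (ξ n i j))
    (hξdist : ∀ n i j, Measure.map (ξ n i j) P = Measure.map X P)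
    (hξindep : iIndepFun
      (fun p : ℕ × Fin N × Fin 2 => ξ p.1 p.2.1 p.2.2) P) (n : ℕ) :
    P.map (fun ω (p : ℕ × Fin N × Fin 2) => ξ (n + p.1) p.2.1 p.2.2 ω)
      = P.map (fun ω (p : ℕ × Fin N × Fin 2) => ξ p.1 p.2.1 p.2.2 ω) := by
  have hinj : Function.Injective
      (fun p : ℕ × Fin N × Fin 2 => ((n + p.1, p.2) : ℕ × Fin N × Fin 2)) := by
    rintro ⟨a, b⟩ ⟨c, d⟩ h
    simpa using h
  have h2 := hξindep.precomp hinj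
  rw [(iIndepFun_iff_map_fun_eq_infinitePi_map (fun p => hξmeas _ _ _)).1 hξindep]
  have h3 := (iIndepFun_iff_map_fun_eq_infinitePi_map (fun p => hξmeas _ _ _)).1 h2
  refine h3.trans ?_
  congr 1
  funext p
  simp only [Function.comp, hξdist]

lemma brw_indep_s9 {Ω : Type*} [MeasurableSpace Ω] (P : Measure Ω) [IsProbabilityMeasure P]
    (N : ℕ) (ξ : ℕ → Fin N → Fin 2 → Ω → ℝ)
    (hξmeas : ∀ n i j, Measurable (ξ n i j))
    (hξindep : iIndepFun
      (fun p : ℕ × Fin N × Fin 2 => ξ p.1 p.2.1 p.2.2) P) (n : ℕ) :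
    Indep (brwFilt N ξ n)
      (MeasurableSpace.comap (fun ω (p : ℕ × Fin N × Fin 2) => ξ (n + p.1) p.2.1 p.2.2 ω)
        inferInstance) P := by
  have h := indep_iSup_of_disjoint
    (m := fun p : ℕ × Fin N × Fin 2 => MeasurableSpace.comap (ξ p.1 p.2.1 p.2.2) inferInstance)
    (fun p => (hξmeas _ _ _).comap_le) hξindep
    (S := {p | p.1 < n}) (T := {p | n ≤ p.1})
    (Set.disjoint_left.2 fun p (hp : p.1 < n) (hq : n ≤ p.1) => absurd hp (not_lt.2 hq))
  refine indep_of_indep_of_le_left (indep_of_indep_of_le_right h ?_) ?_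
  · rw [← measurable_iff_comap_le]
    refine @measurable_pi_lambda _ _ _ (_) _ _ fun p => ?_
    rw [measurable_iff_comap_le]
    exact le_iSup₂_of_le (f := fun (q : ℕ × Fin N × Fin 2) (_ : q ∈ {q : ℕ × Fin N × Fin 2 | n ≤ q.1}) =>
      MeasurableSpace.comap (ξ q.1 q.2.1 q.2.2) inferInstance)
      (n + p.1, p.2) (Nat.le_add_right _ _) le_rfl
  · refine iSup₂_le fun a ha => iSup₂_le fun i j => ?_
    exact le_iSup₂_of_le (f := fun (q : ℕ × Fin N × Fin 2) (_ : q ∈ {q : ℕ × Fin N × Fin 2 | q.1 < n}) =>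
      MeasurableSpace.comap (ξ q.1 q.2.1 q.2.2) inferInstance)
      (a, i, j) ha le_rfl

/-- if `T` is an ℕ-valued stopping time for the filtration `(F_n)`, then for
every `k ≥ 0` and `x ≥ 0`, `P(X_N(T+k) − X_N(T) > x) ≤ P(X_N(k) > x)`. -/
theorem stmt_9 {Ω : Type*} [MeasurableSpace Ω] (P : Measure Ω) [IsProbabilityMeasure P]
    (X : Ω → ℝ) (hXmeas : Measurable X) (hXpos : ∀ ω, 0 ≤ X ω)
    (N : ℕ) (hN : 1 ≤ N)
    (ξ : ℕ → Fin N → Fin 2 → Ω → ℝ)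
    (hξmeas : ∀ n i j, Measurable (ξ n i j))
    (hξpos : ∀ n i j ω, 0 ≤ ξ n i j ω)
    (hξdist : ∀ n i j, Measure.map (ξ n i j) P = Measure.map X P)
    (hξindep : iIndepFun
      (fun p : ℕ × Fin N × Fin 2 => ξ p.1 p.2.1 p.2.2) P)
    (T : Ω → ℕ) (hT : ∀ n : ℕ, MeasurableSet[brwFilt N ξ n] {ω | T ω ≤ n})
    (k : ℕ) (x : ℝ) (hx : 0 ≤ x) :
    P {ω | x < brwMax N (fun a b c => ξ a b c ω) (T ω + k) -
          brwMax N (fun a b c => ξ a b c ω) (T ω)} ≤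
      P {ω | x < brwMax N (fun a b c => ξ a b c ω) k} := by
  classical
  set A : Set (ℕ × Fin N × Fin 2 → ℝ) := {z | x < brwMax N (fun a b c => z (a, b, c)) k} with hA
  have hAm : MeasurableSet A := measurableSet_lt measurable_const (brwMax_measurable N k)
  set η : ℕ → Ω → (ℕ × Fin N × Fin 2 → ℝ) := fun n ω p => ξ (n + p.1) p.2.1 p.2.2 ω with hη
  have hηm : ∀ n, Measurable (η n) := fun n => measurable_pi_lambda _ fun p => hξmeas _ _ _
  have hlaw : ∀ n, P (η n ⁻¹' A) = P {ω | x < brwMax N (fun a b c => ξ a b c ω) k} := by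
    intro n
    rw [← Measure.map_apply (hηm n) hAm, brw_law P X hXmeas N ξ hξmeas hξdist hξindep n,
      Measure.map_apply (measurable_pi_lambda _ fun p => hξmeas _ _ _) hAm]
    rfl
  have hle : ∀ n, brwFilt N ξ n ≤ ‹MeasurableSpace Ω› := fun n =>
    iSup₂_le fun a _ => iSup₂_le fun i j => (hξmeas a i j).comap_le
  have hmono : ∀ n, brwFilt N ξ n ≤ brwFilt N ξ (n + 1) := fun n =>
    iSup₂_le fun a ha => le_iSup₂_of_le (f := fun (k : ℕ) (_ : k < n + 1) =>
      ⨆ (i : Fin N) (j : Fin 2), MeasurableSpace.comap (ξ k i j) inferInstance)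
      a (Nat.lt_succ_of_lt ha) le_rfl
  have hTeq : ∀ n, MeasurableSet[brwFilt N ξ n] {ω | T ω = n} := by
    intro n
    cases n with
    | zero => simpa using hT 0
    | succ n =>
      have : {ω | T ω = n + 1} = {ω | T ω ≤ n + 1} \ {ω | T ω ≤ n} := by
        ext ω; simp only [Set.mem_setOf_eq, Set.mem_sdiff]; omega
      rw [this]
      exact MeasurableSet.diff (hT (n + 1)) (hmono n _ (hT n))
  have hsub : {ω | x < brwMax N (fun a b c => ξ a b c ω) (T ω + k) -
          brwMax N (fun a b c => ξ a b c ω) (T ω)} ⊆ ⋃ n, {ω | T ω = n} ∩ η n ⁻¹' A := by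
    intro ω hω
    refine Set.mem_iUnion.2 ⟨T ω, rfl, ?_⟩
    exact lt_of_lt_of_le hω (brwMax_sub N hN (fun a b c => ξ a b c ω) (T ω) k)
  have hind : ∀ n, P ({ω | T ω = n} ∩ η n ⁻¹' A) = P {ω | T ω = n} * P (η n ⁻¹' A) := fun n =>
    (Indep_iff _ _ P).1 (brw_indep_s9 P N ξ hξmeas hξindep n) _ _ (hTeq n) ⟨A, hAm, rfl⟩
  have hsum : ∑' n, P {ω | T ω = n} = 1 := by
    rw [← measure_iUnion]
    · have : ⋃ n, {ω | T ω = n} = Set.univ := by ext ω; simp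
      rw [this, measure_univ]
    · intro a b hab
      exact Set.disjoint_left.2 fun ω h1 h2 => hab (h1.symm.trans h2)
    · exact fun n => hle n _ (hTeq n)
  calc _ ≤ P (⋃ n, {ω | T ω = n} ∩ η n ⁻¹' A) := measure_mono hsub
    _ ≤ ∑' n, P ({ω | T ω = n} ∩ η n ⁻¹' A) := measure_iUnion_le _
    _ = ∑' n, P {ω | T ω = n} * P {ω | x < brwMax N (fun a b c => ξ a b c ω) k} := by
      simp only [hind, hlaw]
    _ = _ := by rw [ENNReal.tsum_mul_right, hsum, one_mul]

end
end

section
/- For every integer n ≥ 0, define ξ^n by ξ^n_t = ξ_t for t > n and ξ^n_t = 0 for t ≤ n, and let R_{ξ^n} be its stairs functional. Then for all integers 0 ≤ n ≤ m, R_ξ(m) ≤ R_ξ(n) + R_{ξ^n}(m). -/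
open MeasureTheory Real Filter Set

noncomputable section

/-- Auxiliary construction of the stairs functional: `stairsAux ξ n` agrees with `R_ξ` on
`(-∞, n]`; on `(n-1, n]` it is given by the defining recursion
`R_ξ(t) = sup_{s ∈ [0,1]} (R_ξ(t−s−1) + ξ(t−s))`. -/
def stairsAux (ξ : ℝ → ℝ) : ℕ → ℝ → ℝ
  | 0, _ => 0
  | n + 1, t =>
    if t ≤ n then stairsAux ξ n t
    else ⨆ s : Set.Icc (0 : ℝ) 1, (stairsAux ξ n (t - (s : ℝ) - 1) + ξ (t - (s : ℝ)))

/-- The stairs functional `R_ξ`: `R_ξ(t) = 0` for `t ≤ 0` and, inductively for `t ∈ (n, n+1]`,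
`R_ξ(t) = sup_{s ∈ [0,1]} (R_ξ(t−s−1) + ξ(t−s))`. -/
def stairs (ξ : ℝ → ℝ) (t : ℝ) : ℝ :=
  stairsAux ξ ⌈t⌉₊ t

def StairsGood (ξ : ℝ → ℝ) : Prop :=
  (∀ t, 0 ≤ ξ t) ∧ (∀ t ≤ (0 : ℝ), ξ t = 0) ∧ ∀ N : ℝ, ∃ C, 0 ≤ C ∧ ∀ t ≤ N, ξ t ≤ C

theorem stairsAux_nonneg' {ξ : ℝ → ℝ} (h : ∀ t, 0 ≤ ξ t) (k : ℕ) :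
    ∀ t, 0 ≤ stairsAux ξ k t := by
  induction k with
  | zero => intro t; simp [stairsAux]
  | succ k ih =>
    intro t
    simp only [stairsAux]
    split_ifs
    · exact ih t
    · exact Real.iSup_nonneg fun s => add_nonneg (ih _) (h _)

theorem stairsAux_bdd' {ξ : ℝ → ℝ} {N C : ℝ} (hC : 0 ≤ C) (h : ∀ t ≤ N, ξ t ≤ C) (k : ℕ) :
    ∀ t ≤ N, stairsAux ξ k t ≤ k * C := by
  induction k with
  | zero => intro t _; simp [stairsAux]
  | succ k ih =>
    intro t ht
    simp only [stairsAux]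
    push_cast
    split_ifs
    · have := ih t ht
      linarith
    · haveI : Nonempty (Set.Icc (0 : ℝ) 1) := ⟨⟨0, by simp⟩⟩
      refine ciSup_le fun s => ?_
      have hs := s.2.1
      have h1 := ih (t - s - 1) (by linarith)
      have h2 := h (t - s) (by linarith)
      linarith

theorem stairsAux_eq' (ξ : ℝ → ℝ) (k : ℕ) : ∀ v : ℝ, v ≤ k → stairsAux ξ k v = stairs ξ v := by
  induction k with
  | zero =>
    intro v hv
    have : ⌈v⌉₊ = 0 := Nat.ceil_eq_zero.2 (by simpa using hv)
    simp [stairs, this]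
  | succ k ih =>
    intro v hv
    by_cases hk : v ≤ k
    · rw [← ih v hk]
      simp [stairsAux, hk]
    · have : ⌈v⌉₊ = k + 1 := by
        rw [Nat.ceil_eq_iff (by omega)]
        exact ⟨by simpa using hk, hv⟩
      rw [stairs, this]

theorem stairs_zero' (ξ : ℝ → ℝ) {t : ℝ} (ht : t ≤ 0) : stairs ξ t = 0 := by
  rw [← stairsAux_eq' ξ 0 t (by simpa using ht)]
  rfl

theorem stairs_rec' (ξ : ℝ → ℝ) {t : ℝ} (ht : 0 < t) :
    stairs ξ t = ⨆ s : Set.Icc (0 : ℝ) 1, (stairs ξ (t - (s : ℝ) - 1) + ξ (t - (s : ℝ))) := by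
  obtain ⟨k, hk⟩ : ∃ k, ⌈t⌉₊ = k + 1 := Nat.exists_eq_succ_of_ne_zero (Nat.ceil_pos.2 ht).ne'
  have h := (Nat.ceil_eq_iff (by omega)).1 hk
  have h1 : (k : ℝ) < t := by simpa using h.1
  have h2 : t ≤ k + 1 := by simpa using h.2
  rw [stairs, hk, stairsAux, if_neg (not_le.2 h1)]
  congr 1
  funext s
  have hs := s.2.1
  rw [stairsAux_eq' ξ k _ (by linarith)]

theorem stairs_nonneg' {ξ : ℝ → ℝ} (h : ∀ t, 0 ≤ ξ t) (t : ℝ) : 0 ≤ stairs ξ t :=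
  stairsAux_nonneg' h _ _

theorem stairs_upper' {ξ : ℝ → ℝ} {t M : ℝ} (ht : 0 < t)
    (h : ∀ u, t - 1 ≤ u → u ≤ t → stairs ξ (u - 1) + ξ u ≤ M) : stairs ξ t ≤ M := by
  rw [stairs_rec' ξ ht]
  haveI : Nonempty (Set.Icc (0 : ℝ) 1) := ⟨⟨0, by simp⟩⟩
  refine ciSup_le fun s => ?_
  have h1 := s.2.1
  have h2 := s.2.2
  exact h _ (by linarith) (by linarith)

theorem stairs_lower' {ξ : ℝ → ℝ} (hξ : StairsGood ξ) {t u : ℝ} (ht : 0 < t)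
    (h1 : t - 1 ≤ u) (h2 : u ≤ t) : stairs ξ (u - 1) + ξ u ≤ stairs ξ t := by
  rw [stairs_rec' ξ ht]
  obtain ⟨C, hC, hb⟩ := hξ.2.2 t
  have hbdd : BddAbove (Set.range fun s : Set.Icc (0 : ℝ) 1 =>
      stairs ξ (t - (s : ℝ) - 1) + ξ (t - (s : ℝ))) := by
    refine ⟨(⌈t⌉₊ : ℝ) * C + C, ?_⟩
    rintro _ ⟨s, rfl⟩
    have hs := s.2.1
    have hc := Nat.le_ceil t
    have e := stairsAux_bdd' hC hb ⌈t⌉₊ (t - s - 1) (by linarith)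
    rw [stairsAux_eq' ξ _ _ (by linarith)] at e
    exact add_le_add e (hb _ (by linarith))
  have := le_ciSup hbdd ⟨t - u, by constructor <;> linarith⟩
  simpa using this

theorem stairs_self' {ξ : ℝ → ℝ} (hξ : StairsGood ξ) (u : ℝ) :
    stairs ξ (u - 1) + ξ u ≤ stairs ξ u := by
  rcases le_or_gt u 0 with hu | hu
  · rw [stairs_zero' ξ hu, stairs_zero' ξ (by linarith), hξ.2.1 u hu]; simp
  · exact stairs_lower' hξ hu (by linarith) le_rfl

theorem stairs_mono' {ξ : ℝ → ℝ} (hξ : StairsGood ξ) (k : ℕ) :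
    ∀ a b : ℝ, b ≤ k → a ≤ b → stairs ξ a ≤ stairs ξ b := by
  induction k with
  | zero =>
    intro a b hb hab
    have hb : b ≤ 0 := by simpa using hb
    rw [stairs_zero' ξ hb, stairs_zero' ξ (by linarith)]
  | succ k ih =>
    intro a b hb hab
    push_cast at hb
    rcases le_or_gt a 0 with ha | ha
    · rw [stairs_zero' ξ ha]; exact stairs_nonneg' hξ.1 b
    refine stairs_upper' ha fun u h1 h2 => ?_
    by_cases hu : b - 1 ≤ u
    · exact stairs_lower' hξ (by linarith) hu (by linarith)
    · have e1 := stairs_self' hξ u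
      have e2 := ih u (b - 1) (by linarith) (by linarith)
      have e3 := stairs_self' hξ b
      have e4 := hξ.1 b
      linarith

theorem stairs_sub' {ξ η : ℝ → ℝ} (hξ : StairsGood ξ) (hη : StairsGood η) (n : ℕ)
    (h : ∀ t : ℝ, (n : ℝ) < t → ξ t = η t) (k : ℕ) :
    ∀ t : ℝ, t ≤ k → stairs ξ t ≤ stairs ξ n + stairs η t := by
  induction k with
  | zero =>
    intro t ht
    rw [stairs_zero' ξ (t := t) (by simpa using ht)]
    exact add_nonneg (stairs_nonneg' hξ.1 _) (stairs_nonneg' hη.1 _)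
  | succ k ih =>
    intro t ht
    push_cast at ht
    have hnn := stairs_nonneg' hη.1 t
    rcases le_or_gt t n with htn | htn
    · have := stairs_mono' hξ n t n le_rfl htn
      linarith
    have t0 : 0 < t := lt_of_le_of_lt n.cast_nonneg htn
    refine stairs_upper' t0 fun u h1 h2 => ?_
    rcases le_or_gt u n with hu | hu
    · have e1 := stairs_self' hξ u
      have e2 := stairs_mono' hξ n u n le_rfl hu
      linarith
    · have e1 := ih (u - 1) (by linarith)
      have e2 := stairs_lower' hη t0 h1 h2
      rw [h u hu]
      linarith

/-- with `ξ^n` the truncation of `ξ` vanishing on `(-∞, n]`, the stairs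
functional is subadditive: `R_ξ(m) ≤ R_ξ(n) + R_{ξ^n}(m)` for all integers `0 ≤ n ≤ m`. -/
theorem stmt_12 (ξ : ℝ → ℝ) (hξ0 : ∀ t, 0 ≤ ξ t) (hξneg : ∀ t ≤ (0 : ℝ), ξ t = 0)
    (hξfin : ∀ a : ℝ, 0 < a → ∀ b c : ℝ, {t | t ∈ Set.Icc b c ∧ a ≤ ξ t}.Finite)
    (n m : ℕ) (hnm : n ≤ m) :
    stairs ξ m ≤ stairs ξ n + stairs (fun t => if t ≤ (n : ℝ) then 0 else ξ t) m := by
  have hb : ∀ N : ℝ, ∃ C, 0 ≤ C ∧ ∀ t ≤ N, ξ t ≤ C := by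
    intro N
    have hf := hξfin 1 one_pos 0 N
    obtain ⟨C, hC⟩ := (hf.image ξ).bddAbove
    refine ⟨max C 1, by positivity, fun t ht => ?_⟩
    rcases le_or_gt t 0 with h0 | h0
    · rw [hξneg t h0]; positivity
    rcases le_or_gt 1 (ξ t) with h1 | h1
    · exact le_max_of_le_left (hC ⟨t, ⟨⟨h0.le, ht⟩, h1⟩, rfl⟩)
    · exact le_max_of_le_right h1.le
  have hξ : StairsGood ξ := ⟨hξ0, hξneg, hb⟩
  refine stairs_sub' hξ ⟨fun t => ?_, fun t ht => ?_, fun N => ?_⟩ n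
    (fun t ht => ?_) m m le_rfl
  · split_ifs
    · exact le_rfl
    · exact hξ0 t
  · simp [hξneg t ht]
  · obtain ⟨C, hC, h⟩ := hb N
    refine ⟨C, hC, fun t ht => ?_⟩
    split_ifs
    · exact hC
    · exact h t ht
  · rw [if_neg (not_le.2 ht)]

end
end
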